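/- arXiv:1409.3949 — 9 statements merged into one kernel-verified Lean document; each statement's English description precedes it below -/
import Mathlib

section
/- Let n and k be coprime positive integers and let r, s be integers with r·n − k·s = 1. Let G be the group with presentation on generators a, w, d and relations: d·a = a·d, d·w = w·d, (a·w)^k = d^r, w^n = d^s. Then G is isomorphic to the torus-knot group presented by two generators x, y subject to the single relation x^n = y^k. -/
/-- If `d` commutes with `w`, `w ^ n = d ^ s` and `r n - k s = 1`, then
`(w ^ (-k) * d ^ r) ^ n = d`. -/
lemma aux_pow {H : Type*} [Group H] (w d : H) (n k r s : ℤ) (hc : Commute d w)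
    (h : w ^ n = d ^ s) (hrs : r * n - k * s = 1) : (w ^ (-k) * d ^ r) ^ n = d := by
  have hc2 : Commute (w ^ (-k)) (d ^ r) := (hc.symm.zpow_zpow _ _)
  rw [hc2.mul_zpow, ← zpow_mul, ← zpow_mul, mul_comm (-k) n, zpow_mul, h, ← zpow_mul,
    ← zpow_add]
  have : s * -k + r * n = 1 := by linarith
  rw [this, zpow_one]

lemma aux_back {H : Type*} [Group H] (w d : H) (n k r s : ℤ) (hc : Commute d w)
    (h : w ^ n = d ^ s) (hrs : r * n - k * s = 1) : (w ^ (-k) * d ^ r) ^ s = w := by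
  have hc2 : Commute (w ^ (-k)) (d ^ r) := (hc.symm.zpow_zpow _ _)
  rw [hc2.mul_zpow, ← zpow_mul, ← zpow_mul, mul_comm r s, zpow_mul d, ← h, ← zpow_mul,
    ← zpow_add]
  have : -k * s + n * r = 1 := by linarith
  rw [this, zpow_one]


/-- the presented group ⟨a, w, d : da=ad, dw=wd, (aw)^k = d^r, w^n = d^s⟩
is isomorphic to the torus-knot group ⟨x, y : x^n = y^k⟩ when rn - ks = 1, n, k coprime. -/
theorem stmt_1 (n k : ℕ) (hn : 1 ≤ n) (hk : 1 ≤ k) (hcop : Nat.Coprime n k)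
    (r s : ℤ) (hrs : r * (n : ℤ) - (k : ℤ) * s = 1) :
    Nonempty
      (PresentedGroup
        ({ FreeGroup.of 2 * FreeGroup.of 0 * (FreeGroup.of 0 * FreeGroup.of 2)⁻¹,
           FreeGroup.of 2 * FreeGroup.of 1 * (FreeGroup.of 1 * FreeGroup.of 2)⁻¹,
           (FreeGroup.of 0 * FreeGroup.of 1) ^ k * ((FreeGroup.of 2) ^ r)⁻¹,
           (FreeGroup.of 1) ^ n * ((FreeGroup.of 2) ^ s)⁻¹ } : Set (FreeGroup (Fin 3))) ≃*
       PresentedGroup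
        ({ (FreeGroup.of 0) ^ n * ((FreeGroup.of 1) ^ k)⁻¹ } : Set (FreeGroup (Fin 2)))) := by
  set R : Set (FreeGroup (Fin 3)) :=
    { FreeGroup.of 2 * FreeGroup.of 0 * (FreeGroup.of 0 * FreeGroup.of 2)⁻¹,
      FreeGroup.of 2 * FreeGroup.of 1 * (FreeGroup.of 1 * FreeGroup.of 2)⁻¹,
      (FreeGroup.of 0 * FreeGroup.of 1) ^ k * ((FreeGroup.of 2) ^ r)⁻¹,
      (FreeGroup.of 1) ^ n * ((FreeGroup.of 2) ^ s)⁻¹ } with hR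
  set T : Set (FreeGroup (Fin 2)) :=
    { (FreeGroup.of 0) ^ n * ((FreeGroup.of 1) ^ k)⁻¹ } with hT
  obtain ⟨a, ha⟩ : ∃ a : PresentedGroup R, a = PresentedGroup.of 0 := ⟨_, rfl⟩
  obtain ⟨w, hw⟩ : ∃ w : PresentedGroup R, w = PresentedGroup.of 1 := ⟨_, rfl⟩
  obtain ⟨d, hd⟩ : ∃ d : PresentedGroup R, d = PresentedGroup.of 2 := ⟨_, rfl⟩
  obtain ⟨x, hx⟩ : ∃ x : PresentedGroup T, x = PresentedGroup.of 0 := ⟨_, rfl⟩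
  obtain ⟨y, hy⟩ : ∃ y : PresentedGroup T, y = PresentedGroup.of 1 := ⟨_, rfl⟩
  have hda : Commute d a := by
    have h := PresentedGroup.one_of_mem (rels := R) (x := FreeGroup.of 2 * FreeGroup.of 0 *
      (FreeGroup.of 0 * FreeGroup.of 2)⁻¹) (by simp [hR])
    rw [map_mul, map_inv, mul_inv_eq_one, map_mul, map_mul] at h
    rw [hd, ha]; exact h
  have hdw : Commute d w := by
    have h := PresentedGroup.one_of_mem (rels := R) (x := FreeGroup.of 2 * FreeGroup.of 1 *
      (FreeGroup.of 1 * FreeGroup.of 2)⁻¹) (by simp [hR])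
    rw [map_mul, map_inv, mul_inv_eq_one, map_mul, map_mul] at h
    rw [hd, hw]; exact h
  have hu : (a * w) ^ (k : ℤ) = d ^ r := by
    have h := PresentedGroup.one_of_mem (rels := R) (x := (FreeGroup.of 0 * FreeGroup.of 1) ^ k *
      ((FreeGroup.of 2) ^ r)⁻¹) (by simp [hR])
    rw [map_mul, map_inv, mul_inv_eq_one, map_pow, map_zpow, map_mul] at h
    rw [zpow_natCast, hd, ha, hw]; exact h
  have hwn : w ^ (n : ℤ) = d ^ s := by
    have h := PresentedGroup.one_of_mem (rels := R) (x := (FreeGroup.of 1) ^ n *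
      ((FreeGroup.of 2) ^ s)⁻¹) (by simp [hR])
    rw [map_mul, map_inv, mul_inv_eq_one, map_pow, map_zpow] at h
    rw [zpow_natCast, hd, hw]; exact h
  have hxy : x ^ (n : ℤ) = y ^ (k : ℤ) := by
    have h := PresentedGroup.one_of_mem (rels := T) (x := (FreeGroup.of 0) ^ n *
      ((FreeGroup.of 1) ^ k)⁻¹) (by simp [hT])
    rw [map_mul, map_inv, mul_inv_eq_one, map_pow, map_pow] at h
    rw [zpow_natCast, zpow_natCast, hx, hy]; exact h
  have hdu : Commute d (a * w) := hda.mul_right hdw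
  have hcx : Commute (x ^ (n : ℤ)) x := (Commute.refl x).zpow_left _
  have hcy : Commute (x ^ (n : ℤ)) y := by rw [hxy]; exact (Commute.refl y).zpow_left _
  have hrs' : (-s) * (k : ℤ) - (-(n : ℤ)) * r = 1 := by linarith
  -- the images of `x`, `y`
  have hX := aux_pow w d n k r s hdw hwn hrs
  have hXs := aux_back w d n k r s hdw hwn hrs
  have hY := aux_pow (a * w) d k (-n) (-s) r hdu hu hrs'
  have hYr := aux_back (a * w) d k (-n) (-s) r hdu hu hrs'
  let f : Fin 3 → PresentedGroup T := ![y ^ r * (x ^ s)⁻¹, x ^ s, x ^ (n : ℤ)]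
  let g : Fin 2 → PresentedGroup R :=
    ![w ^ (-(k : ℤ)) * d ^ r, (a * w) ^ (-(-(n : ℤ))) * d ^ (-s)]
  have hf : ∀ z ∈ R, FreeGroup.lift f z = 1 := by
    intro z hz
    simp only [hR, Set.mem_insert_iff, Set.mem_singleton_iff] at hz
    rcases hz with rfl | rfl | rfl | rfl
    · simp only [map_mul, map_inv, FreeGroup.lift_apply_of, mul_inv_eq_one]
      exact ((hcy.zpow_right r).mul_right (hcx.zpow_right s).inv_right).eq
    · simp only [map_mul, map_inv, FreeGroup.lift_apply_of, mul_inv_eq_one]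
      exact (hcx.zpow_right s).eq
    · simp only [map_mul, map_inv, map_pow, map_zpow, FreeGroup.lift_apply_of, mul_inv_eq_one]
      change (y ^ r * (x ^ s)⁻¹ * x ^ s) ^ k = (x ^ (n : ℤ)) ^ r
      rw [inv_mul_cancel_right, hxy, ← zpow_natCast, ← zpow_mul, ← zpow_mul, mul_comm]
    · simp only [map_mul, map_inv, map_pow, map_zpow, FreeGroup.lift_apply_of, mul_inv_eq_one]
      change (x ^ s) ^ n = (x ^ (n : ℤ)) ^ s
      rw [← zpow_natCast, ← zpow_mul, ← zpow_mul, mul_comm]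
  have hg : ∀ z ∈ T, FreeGroup.lift g z = 1 := by
    intro z hz
    simp only [hT, Set.mem_singleton_iff] at hz
    subst hz
    simp only [map_mul, map_inv, map_pow, FreeGroup.lift_apply_of, mul_inv_eq_one]
    rw [← zpow_natCast, ← zpow_natCast]
    exact hX.trans hY.symm
  let F : PresentedGroup R →* PresentedGroup T := PresentedGroup.toGroup hf
  let K : PresentedGroup T →* PresentedGroup R := PresentedGroup.toGroup hg
  have Fa : F a = y ^ r * (x ^ s)⁻¹ := by rw [ha]; exact PresentedGroup.toGroup.of hf
  have Fw : F w = x ^ s := by rw [hw]; exact PresentedGroup.toGroup.of hf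
  have Fd : F d = x ^ (n : ℤ) := by rw [hd]; exact PresentedGroup.toGroup.of hf
  have Kx : K x = w ^ (-(k : ℤ)) * d ^ r := by rw [hx]; exact PresentedGroup.toGroup.of hg
  have Ky : K y = (a * w) ^ (-(-(n : ℤ))) * d ^ (-s) := by
    rw [hy]; exact PresentedGroup.toGroup.of hg
  refine ⟨MonoidHom.toMulEquiv F K ?_ ?_⟩
  · apply PresentedGroup.ext
    intro i
    fin_cases i
    · change K (F (PresentedGroup.of 0)) = PresentedGroup.of 0
      rw [← ha, Fa, map_mul, map_inv, map_zpow, map_zpow, Kx, Ky, hXs, hYr, mul_inv_cancel_right]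
    · change K (F (PresentedGroup.of 1)) = PresentedGroup.of 1
      rw [← hw, Fw, map_zpow, Kx, hXs]
    · change K (F (PresentedGroup.of 2)) = PresentedGroup.of 2
      rw [← hd, Fd, map_zpow, Kx, hX]
  · apply PresentedGroup.ext
    intro i
    fin_cases i
    · change F (K (PresentedGroup.of 0)) = PresentedGroup.of 0
      rw [← hx, Kx, map_mul, map_zpow, map_zpow, Fw, Fd, ← zpow_mul, ← zpow_mul, ← zpow_add]
      have : s * -(k : ℤ) + n * r = 1 := by linarith
      rw [this, zpow_one]
    · change F (K (PresentedGroup.of 1)) = PresentedGroup.of 1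
      rw [← hy, Ky, map_mul, map_zpow, map_zpow, map_mul, Fa, Fw, Fd, inv_mul_cancel_right, hxy,
        ← zpow_mul, ← zpow_mul, ← zpow_add]
      have : r * -(-(n : ℤ)) + k * -s = 1 := by linarith
      rw [this, zpow_one]
end

section
/- Let V be a finite-dimensional vector space over ℂ and let V₁, …, V_n be linear subspaces of V. The following are equivalent: (a) there exists a unique family of subspaces W₁, …, W_n of V such that V = W₁ ⊕ ⋯ ⊕ W_n and, for every i, V_i = ⊕_{j ≠ i} W_j; (b) dim V = Σ_{i=1}^n codim V_i and ∩_{i=1}^n V_i = {0}. -/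
lemma aux_proj {V : Type*} [AddCommGroup V] [Module ℂ V] {n : ℕ} (W : Fin n → Submodule ℂ V)
    (h : DirectSum.IsInternal W) :
    ∃ p : Fin n → V →ₗ[ℂ] V, (∀ i x, p i x ∈ W i) ∧ (∀ x, ∑ i, p i x = x) ∧
      ∀ i j, i ≠ j → ∀ x ∈ W j, p i x = 0 := by
  classical
  let e := LinearEquiv.ofBijective (DirectSum.coeLinearMap W) h
  refine ⟨fun i => (W i).subtype ∘ₗ DirectSum.component ℂ (Fin n) (fun i => W i) i ∘ₗ
    e.symm.toLinearMap, ?_, ?_, ?_⟩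
  · intro i x
    simp
  · intro x
    obtain ⟨y, rfl⟩ := e.surjective x
    simp only [LinearMap.comp_apply, LinearEquiv.coe_coe, LinearEquiv.symm_apply_apply]
    change _ = DirectSum.coeLinearMap W y
    conv_rhs => rw [← DirectSum.sum_univ_of y]
    rw [map_sum]
    refine Finset.sum_congr rfl fun i _ => ?_
    exact (DirectSum.coeLinearMap_of W i (y i)).symm
  · intro i j hij x hx
    have : e.symm x = DirectSum.of (fun i => W i) j ⟨x, hx⟩ := by
      rw [LinearEquiv.symm_apply_eq]
      exact (DirectSum.coeLinearMap_of W j ⟨x, hx⟩).symm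
    simp only [LinearMap.comp_apply, LinearEquiv.coe_coe, this]
    have h2 := DirectSum.of_eq_of_ne (β := fun i => W i) j i ⟨x, hx⟩ hij
    change ((DirectSum.of (fun i => W i) j ⟨x, hx⟩ i : W i) : V) = 0
    rw [h2]; rfl

lemma aux_mem {V : Type*} [AddCommGroup V] [Module ℂ V] {n : ℕ} (W : Fin n → Submodule ℂ V)
    (p : Fin n → V →ₗ[ℂ] V) (h1 : ∀ i x, p i x ∈ W i) (h2 : ∀ x, ∑ i, p i x = x)
    (h3 : ∀ i j, i ≠ j → ∀ x ∈ W j, p i x = 0) (i : Fin n) (x : V) :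
    x ∈ (⨆ j ∈ ({i}ᶜ : Set (Fin n)), W j) ↔ p i x = 0 := by
  constructor
  · intro hx
    have : (⨆ j ∈ ({i}ᶜ : Set (Fin n)), W j) ≤ LinearMap.ker (p i) :=
      iSup₂_le fun j hj y hy => h3 i j (fun h => hj h.symm) y hy
    exact this hx
  · intro hx
    rw [← h2 x]
    refine Submodule.sum_mem _ fun j _ => ?_
    by_cases hj : j = i
    · subst hj; rw [hx]; exact Submodule.zero_mem _
    · exact (le_iSup₂_of_le (f := fun j (_ : j ∈ ({i}ᶜ : Set (Fin n))) => W j) j hj le_rfl) (h1 j x)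

lemma aux_b {V : Type*} [AddCommGroup V] [Module ℂ V] [FiniteDimensional ℂ V]
    {n : ℕ} (U : Fin n → Submodule ℂ V)
    (hd : Module.finrank ℂ V = ∑ i, (Module.finrank ℂ V - Module.finrank ℂ (U i)))
    (hi : (⨅ i, U i) = ⊥) (x : V) :
    ∃ w : Fin n → V, (∀ i j, j ≠ i → w i ∈ U j) ∧ ∑ i, w i = x ∧ ∀ i, x ∈ U i → w i = 0 := by
  classical
  let φ : V →ₗ[ℂ] (∀ i, V ⧸ U i) := LinearMap.pi fun i => (U i).mkQ
  have hinj : Function.Injective φ := by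
    rw [← LinearMap.ker_eq_bot, LinearMap.ker_pi]
    simpa using hi
  have hdim : Module.finrank ℂ V = Module.finrank ℂ (∀ i, V ⧸ U i) := by
    rw [Module.finrank_pi_fintype, hd]
    refine Finset.sum_congr rfl fun i _ => ?_
    have := (U i).finrank_quotient_add_finrank
    omega
  have hsurj : Function.Surjective φ :=
    (LinearMap.injective_iff_surjective_of_finrank_eq_finrank hdim).1 hinj
  choose w hw using fun i => hsurj (Pi.single i (φ x i))
  refine ⟨w, ?_, ?_, ?_⟩
  · intro i j hij
    have := congrFun (hw i) j
    rw [Pi.single_eq_of_ne hij] at this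
    exact (Submodule.Quotient.mk_eq_zero _).1 this
  · apply hinj
    rw [map_sum]
    simp_rw [hw]
    exact Finset.univ_sum_single (φ x)
  · intro i hx
    apply hinj
    have : φ x i = 0 := (Submodule.Quotient.mk_eq_zero _).2 hx
    rw [hw, this, Pi.single_zero, map_zero]

/-- characterization of Pochhammer-type subspace configurations
(Lemma 4.1 (a) ⇔ (b) of the paper). -/
theorem stmt_2 {V : Type*} [AddCommGroup V] [Module ℂ V] [FiniteDimensional ℂ V]
    {n : ℕ} (Vsub : Fin n → Submodule ℂ V) :
    (∃! W : Fin n → Submodule ℂ V,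
        DirectSum.IsInternal W ∧
        ∀ i, Vsub i = ⨆ j ∈ ({i}ᶜ : Set (Fin n)), W j) ↔
    (Module.finrank ℂ V =
        ∑ i, (Module.finrank ℂ V - Module.finrank ℂ (Vsub i)) ∧
      (⨅ i, Vsub i) = ⊥) := by
  classical
  constructor
  · rintro ⟨W, ⟨hW, hV⟩, -⟩
    obtain ⟨p, h1, h2, h3⟩ := aux_proj W hW
    have hm : ∀ i x, x ∈ Vsub i ↔ p i x = 0 := fun i x => by
      rw [hV i]; exact aux_mem W p h1 h2 h3 i x
    have hfix : ∀ i, ∀ x ∈ W i, p i x = x := by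
      intro i x hx
      conv_rhs => rw [← h2 x]
      rw [Finset.sum_eq_single i (fun j _ hj => h3 j i hj x hx) (by simp)]
    constructor
    · have e := LinearEquiv.ofBijective (DirectSum.coeLinearMap W) hW
      have hs : Module.finrank ℂ V = ∑ i, Module.finrank ℂ (W i) := by
        rw [← e.finrank_eq, Module.finrank_directSum]
      rw [hs]
      refine Finset.sum_congr rfl fun i _ => ?_
      rw [← hs]
      have hk : Vsub i = LinearMap.ker (p i) := by ext x; simp [hm]
      have hr : LinearMap.range (p i) = W i := by
        ext x
        constructor
        · rintro ⟨y, rfl⟩; exact h1 i y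
        · intro hx; exact ⟨x, hfix i x hx⟩
      have := (p i).finrank_range_add_finrank_ker
      rw [hr, ← hk] at this
      omega
    · rw [eq_bot_iff]
      intro x hx
      rw [Submodule.mem_iInf] at hx
      rw [Submodule.mem_bot, ← h2 x]
      exact Finset.sum_eq_zero fun i _ => (hm i x).1 (hx i)
  · rintro ⟨hd, hi⟩
    have hb := aux_b Vsub hd hi
    refine ⟨fun i => ⨅ j ∈ ({i}ᶜ : Set (Fin n)), Vsub j, ⟨?_, ?_⟩, ?_⟩
    · rw [DirectSum.isInternal_submodule_iff_iSupIndep_and_iSup_eq_top]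
      constructor
      · intro i
        have hle : (⨆ j, ⨆ (_ : j ≠ i), ⨅ k ∈ ({j}ᶜ : Set (Fin n)), Vsub k) ≤ Vsub i :=
          iSup₂_le fun j hj => iInf₂_le i (fun h => hj h.symm)
        refine Disjoint.mono_right hle ?_
        rw [disjoint_iff, eq_bot_iff, ← hi]
        refine le_iInf fun j => ?_
        by_cases hj : j = i
        · subst hj; exact inf_le_right
        · exact inf_le_left.trans (iInf₂_le j hj)
      · rw [eq_top_iff]
        intro x _
        obtain ⟨w, hw, hs, -⟩ := hb x
        rw [← hs]
        refine Submodule.sum_mem _ fun i _ => ?_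
        refine Submodule.mem_iSup_of_mem i ?_
        simp only [Submodule.mem_iInf]
        exact fun j hj => hw i j hj
    · intro i
      apply le_antisymm
      · intro x hx
        obtain ⟨w, hw, hs, h0⟩ := hb x
        rw [← hs]
        refine Submodule.sum_mem _ fun j _ => ?_
        by_cases hj : j = i
        · subst hj; rw [h0 j hx]; exact Submodule.zero_mem _
        · refine Submodule.mem_iSup_of_mem j (Submodule.mem_iSup_of_mem hj ?_)
          simp only [Submodule.mem_iInf]
          exact fun k hk => hw j k hk
      · exact iSup₂_le fun j hj => iInf₂_le i (fun h => hj h.symm)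
    · rintro W ⟨hW, hV⟩
      obtain ⟨p, h1, h2, h3⟩ := aux_proj W hW
      have hm : ∀ i x, x ∈ Vsub i ↔ p i x = 0 := fun i x => by
        rw [hV i]; exact aux_mem W p h1 h2 h3 i x
      funext i
      ext x
      simp only [Submodule.mem_iInf, hm]
      constructor
      · intro hx j hj
        exact h3 j i hj x hx
      · intro hx
        rw [← h2 x, Finset.sum_eq_single i (fun j _ hj => hx j hj) (by simp)]
        exact h1 i x
end

section
/- Let m ≥ 1 and, for i = 1, …, m, let f_i ∈ ℂ^m be nonzero vectors; set A_i = I_m − f_i·e_iᵀ, where e_i is the i-th standard basis vector of ℂ^m, and set A = A₁·A₂⋯A_m. Then the following are equivalent: (1) the m×m matrix whose (i,j) entry is e_iᵀ·f_j is invertible; (2) the vectors f₁, …, f_m are linearly independent; (3) I_m − A is invertible. -/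
lemma aux_prefix {m : ℕ} (f : Fin m → (Fin m → ℂ)) (A : Fin m → Matrix (Fin m) (Fin m) ℂ)
    (hA : ∀ i, A i = 1 - Matrix.vecMulVec (f i) (Pi.single i 1)) (k : ℕ) (hk : k ≤ m)
    (v : Fin m → ℂ) :
    ((List.ofFn A).take k).prod.mulVec v = v - ∑ i : Fin m, if (i : ℕ) < k then
      v i • ((List.ofFn A).take (i : ℕ)).prod.mulVec (f i) else 0 := by
  induction k with
  | zero => simp
  | succ k ih =>
    have hk' : k < m := hk
    have h1 : ((List.ofFn A).take (k+1)).prod = ((List.ofFn A).take k).prod * A ⟨k, hk'⟩ := by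
      rw [List.prod_take_succ _ _ (by simpa using hk')]
      simp
    have h2 : (A ⟨k, hk'⟩).mulVec v = v - v ⟨k, hk'⟩ • f ⟨k, hk'⟩ := by
      rw [hA, Matrix.sub_mulVec, Matrix.one_mulVec, Matrix.vecMulVec_mulVec]
      simp
    rw [h1, ← Matrix.mulVec_mulVec, h2, Matrix.mulVec_sub, ih hk'.le, Matrix.mulVec_smul, sub_sub]
    congr 1
    have h3 : v ⟨k, hk'⟩ • ((List.ofFn A).take k).prod.mulVec (f ⟨k, hk'⟩) =
      ∑ i : Fin m, if i = ⟨k, hk'⟩ then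
      v i • ((List.ofFn A).take (i : ℕ)).prod.mulVec (f i) else 0 := by
      simp
    rw [h3, ← Finset.sum_add_distrib]
    refine Finset.sum_congr rfl fun i _ => ?_
    have h4 : (i = ⟨k, hk'⟩) ↔ (i : ℕ) = k := by rw [Fin.ext_iff]
    simp only [h4]
    rcases lt_trichotomy (i : ℕ) k with h | h | h
    · simp [h, h.ne, Nat.lt_succ_of_lt h]
    · simp [h]
    · simp [h.ne', not_lt.mpr h.le, show ¬ (i : ℕ) < k + 1 by omega]

/-- for pseudo-reflections in standard form `A_i = I − f_i·e_iᵀ`,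
invertibility of the Gram-type matrix `[e_iᵀ f_j]`, linear independence of the `f_i`,
and invertibility of `I − A₁⋯A_m` are equivalent. -/
theorem stmt_6 {m : ℕ} (hm : 1 ≤ m) (f : Fin m → (Fin m → ℂ)) (hf : ∀ i, f i ≠ 0) :
    let A : Fin m → Matrix (Fin m) (Fin m) ℂ :=
      fun i => 1 - Matrix.vecMulVec (f i) (Pi.single i 1)
    (IsUnit (Matrix.of fun i j : Fin m => f j i) ↔ LinearIndependent ℂ f) ∧
    (LinearIndependent ℂ f ↔
      IsUnit ((1 : Matrix (Fin m) (Fin m) ℂ) - (List.ofFn A).prod)) := by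
  intro A
  have hA : ∀ i, A i = 1 - Matrix.vecMulVec (f i) (Pi.single i 1) := fun i => rfl
  have hF : IsUnit (Matrix.of fun i j : Fin m => f j i) ↔ LinearIndependent ℂ f := by
    rw [← Matrix.linearIndependent_cols_iff_isUnit]
    rfl
  refine ⟨hF, hF.symm.trans ?_⟩
  let U : Matrix (Fin m) (Fin m) ℂ :=
    Matrix.of fun i k => if i = k then 1 else if i < k then f k i else 0
  have hU : U.det = 1 := by
    rw [Matrix.det_of_upperTriangular]
    · simp [U]
    · intro i j hij
      have hij' : j < i := hij
      simp [U, hij'.ne', hij'.le]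
  have key : (Matrix.of fun i j : Fin m => f j i) = (1 - (List.ofFn A).prod) * U := by
    have hcol : ∀ k, f k = (1 - (List.ofFn A).prod).mulVec (fun i => U i k) := by
      intro k
      have h := aux_prefix f A hA m le_rfl (fun i => U i k)
      rw [List.take_of_length_le (by simp)] at h
      rw [Matrix.sub_mulVec, Matrix.one_mulVec, h, sub_sub_cancel]
      have h2 := aux_prefix f A hA k k.2.le (f k)
      have h3 : ((List.ofFn A).take k).prod.mulVec (f k) =
        ∑ i : Fin m, if i = k then
          ((List.ofFn A).take (i : ℕ)).prod.mulVec (f i) else 0 := by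
        simp
      rw [eq_sub_iff_add_eq, h3, ← Finset.sum_add_distrib] at h2
      conv_lhs => rw [← h2]
      refine Finset.sum_congr rfl fun i _ => ?_
      rw [if_pos i.2]
      by_cases hik : i = k
      · subst hik
        simp [U]
      · by_cases hlt : i < k
        · simp [U, hik, hlt]
        · simp [U, hik, hlt]
    ext i k
    exact congrFun (hcol k) i
  rw [key, Matrix.isUnit_iff_isUnit_det, Matrix.isUnit_iff_isUnit_det, Matrix.det_mul, hU, mul_one]
end

section
/- Let k ≥ 1, ℓ ≥ 2 and ν ≥ 1 be integers, and let m₁ ≥ m₂ ≥ … ≥ m_ν be integers with 1 ≤ m_i ≤ ℓ for all i, Σ_{i=1}^ν m_i = kℓ and Σ_{i=1}^ν m_i² = kℓ² − 2ℓ + 2. Then ν = k + 1, m₁ = … = m_{k−1} = ℓ, m_k = ℓ − 1 and m_{k+1} = 1. -/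
/-- combinatorial lemma for turbines without shaft:
if ℓ ≥ m₁ ≥ ⋯ ≥ m_ν ≥ 1, Σ m_i = kℓ and Σ m_i² = kℓ² − 2ℓ + 2, then
ν = k + 1, m₁ = ⋯ = m_{k−1} = ℓ, m_k = ℓ − 1 and m_{k+1} = 1. -/
theorem stmt_9 {k ℓ ν : ℕ} (hk : 1 ≤ k) (hℓ : 2 ≤ ℓ) (hν : 1 ≤ ν)
    (m : Fin ν → ℕ) (hanti : Antitone m)
    (hlb : ∀ i, 1 ≤ m i) (hub : ∀ i, m i ≤ ℓ)
    (hsum : ∑ i, m i = k * ℓ)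
    (hsq : ∑ i, (m i) ^ 2 = k * ℓ ^ 2 - 2 * ℓ + 2) :
    ν = k + 1 ∧ ∀ i : Fin ν,
      ((i : ℕ) < k - 1 → m i = ℓ) ∧
      ((i : ℕ) = k - 1 → m i = ℓ - 1) ∧
      ((i : ℕ) = k → m i = 1) := by
  have hle : 2 * ℓ ≤ k * ℓ ^ 2 := by nlinarith [Nat.mul_le_mul hk (le_refl (ℓ ^ 2))]
  have hsq' : ∑ i, (m i) ^ 2 + 2 * ℓ = k * ℓ ^ 2 + 2 := by omega
  have hF : ∑ i, ((m i : ℤ) * (ℓ - m i)) = 2 * (ℓ - 1) := by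
    have h1 : ∑ i, (m i : ℤ) = k * ℓ := by exact_mod_cast hsum
    have h2 : ∑ i, (m i : ℤ) ^ 2 + 2 * ℓ = k * ℓ ^ 2 + 2 := by exact_mod_cast hsq'
    have h3 : ∑ i, ((m i : ℤ) * (ℓ - m i)) = (∑ i, (m i : ℤ)) * ℓ - ∑ i, (m i : ℤ) ^ 2 := by
      rw [Finset.sum_mul, ← Finset.sum_sub_distrib]
      exact Finset.sum_congr rfl fun i _ => by ring
    rw [h3, h1]; linarith
  have hz : ∀ i, (0 : ℤ) ≤ (m i : ℤ) * (ℓ - m i) := fun i => by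
    have := hub i
    exact mul_nonneg (by positivity) (by omega)
  have hg : ∀ i, m i < ℓ → (ℓ : ℤ) - 1 ≤ (m i : ℤ) * (ℓ - m i) := fun i hi => by
    have h1 : (1 : ℤ) ≤ m i := by exact_mod_cast hlb i
    have h2 : (m i : ℤ) + 1 ≤ ℓ := by exact_mod_cast hi
    nlinarith [mul_nonneg (sub_nonneg.2 h1) (sub_nonneg.2 h2)]
  have hl2 : (2 : ℤ) ≤ ℓ := by exact_mod_cast hℓ
  obtain _ | _ | n := ν
  · omega
  · exfalso
    replace hsum : m 0 = k * ℓ := (Fin.sum_univ_one _).symm.trans hsum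
    replace hF : (m 0 : ℤ) * (ℓ - m 0) = 2 * (ℓ - 1) := (Fin.sum_univ_one (fun i => (m i : ℤ) * (ℓ - m i))).symm.trans hF
    have h := hub 0
    have h0 : m 0 = ℓ := by
      apply le_antisymm h
      rw [hsum]; exact Nat.le_mul_of_pos_left _ hk
    rw [h0] at hF
    simp at hF
    omega
  · have hfull : ∀ i : Fin n, m i.castSucc.castSucc = ℓ := by
      intro i
      by_contra hne
      have h1 : m i.castSucc.castSucc < ℓ := lt_of_le_of_ne (hub _) hne
      have h2 : m (Fin.last n).castSucc < ℓ :=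
        lt_of_le_of_lt (hanti (by simp [Fin.le_def])) h1
      have h3 : m (Fin.last (n+1)) < ℓ := lt_of_le_of_lt (hanti (Fin.le_last _)) h1
      rw [Fin.sum_univ_castSucc, Fin.sum_univ_castSucc] at hF
      have h4 := Finset.single_le_sum
        (f := fun i : Fin n => (m i.castSucc.castSucc : ℤ) * (ℓ - m i.castSucc.castSucc))
        (fun j _ => hz _) (Finset.mem_univ i)
      have := hg _ h1
      have := hg _ h2
      have := hg _ h3
      linarith
    have hab := hanti (Fin.le_last (Fin.last n).castSucc)
    have ha := hub (Fin.last n).castSucc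
    have hb1 := hlb (Fin.last (n+1))
    have ha1 := hlb (Fin.last n).castSucc
    rw [Fin.sum_univ_castSucc, Fin.sum_univ_castSucc] at hF hsum
    simp only [hfull, sub_self, mul_zero, Finset.sum_const_zero, zero_add, Finset.sum_const,
      Finset.card_univ, Fintype.card_fin, smul_eq_mul] at hF hsum
    have key : k = n + 1 ∧ m (Fin.last n).castSucc = ℓ - 1 ∧ m (Fin.last (n+1)) = 1 := by
      generalize m (Fin.last n).castSucc = a at *
      generalize m (Fin.last (n+1)) = b at *
      have hkn : k = n + 1 := by
        have h1 : n < k := by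
          by_contra h
          have := Nat.mul_le_mul_right ℓ (not_lt.1 h)
          omega
        by_contra h
        have h2 : n + 2 ≤ k := by omega
        have := Nat.mul_le_mul_right ℓ h2
        rw [add_mul] at this
        have e1 : a = ℓ := by omega
        have e2 : b = ℓ := by omega
        subst e1; subst e2
        simp at hF
        omega
      subst hkn
      have hs : a + b = ℓ := by linarith
      subst hs
      push_cast at hF
      have hp : ((a : ℤ) - 1) * (b - 1) = 0 := by linarith
      rcases mul_eq_zero.1 hp with h | h <;> omega
    obtain ⟨rfl, hA, hB⟩ := key
    refine ⟨rfl, fun i => ⟨fun hi => ?_, fun hi => ?_, fun hi => ?_⟩⟩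
    · exact hfull ⟨i, by omega⟩
    · rw [← hA]; congr 1; ext; simpa using hi
    · rw [← hB]; congr 1; ext; simpa using hi
end

section
/- Let k ≥ 1, ℓ ≥ 1, m = kℓ, and let c be a nonzero complex number. Let W ∈ GL_m(ℂ) satisfy W^k = c·I_m and let X₁, …, X_ℓ ∈ GL_m(ℂ) be pseudo-reflections. For j = 0, …, k−1 and i = 1, …, ℓ set g_{j,i} = W^{k−1−j}·X_i·W^{−(k−1−j)}. If ∩_{j,i} ker(g_{j,i} − I_m) = {0}, then W is diagonalizable and each of the k distinct k-th roots of c is an eigenvalue of W of multiplicity exactly ℓ; equivalently, W is conjugate in GL_m(ℂ) to the m×m block matrix with k×k blocks of size ℓ×ℓ, having identity blocks I_ℓ on the superdiagonal, the block c·I_ℓ in the lower-left corner, and zero blocks elsewhere. -/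
theorem rank_one_aux {n : ℕ} (M : Matrix (Fin n) (Fin n) ℂ) (h : M.rank = 1) :
    ∃ u v : Fin n → ℂ, M = Matrix.vecMulVec u v := by
  obtain ⟨u, -, hu⟩ := finrank_eq_one_iff'.1 h
  choose v hv using fun j : Fin n =>
    hu ⟨M.mulVecLin (Pi.single j 1), LinearMap.mem_range_self _ _⟩
  refine ⟨u.1, v, ?_⟩
  ext i j
  have := congrFun (congrArg Subtype.val (hv j)) i
  simp [Matrix.col_apply] at this
  rw [Matrix.vecMulVec_apply, ← this, mul_comm]

theorem inv_aux {n k : ℕ} (c : ℂ) (hc : c ≠ 0) (W : Matrix (Fin n) (Fin n) ℂ)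
    (hWk : W ^ k = c • (1 : Matrix (Fin n) (Fin n) ℂ)) (s : ℕ) (hs : s < k) :
    ∃ p : Fin k, ∃ d : ℂ, (W ^ s)⁻¹ = d • W ^ (p : ℕ) := by
  rcases Nat.eq_zero_or_pos s with rfl | h0
  · exact ⟨⟨0, hs⟩, 1, by simp⟩
  · refine ⟨⟨k - s, by omega⟩, c⁻¹, ?_⟩
    apply Matrix.inv_eq_right_inv
    rw [Matrix.mul_smul, ← pow_add]
    simp only
    rw [Nat.add_sub_cancel' hs.le, hWk, smul_smul, inv_mul_cancel₀ hc, one_smul]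


/-- linear-algebra core of the lemma on turbines without shaft:
if W^k = c·I, the g_{j,i} = W^{k−1−j}·X_i·W^{−(k−1−j)} are conjugates of
pseudo-reflections with trivial common fixed space, then W is conjugate to the
block cyclic matrix with identity blocks on the superdiagonal and c·I_ℓ in the
lower-left corner. -/
theorem stmt_10 {k ℓ : ℕ} (hk : 1 ≤ k) (hℓ : 1 ≤ ℓ) (c : ℂ) (hc : c ≠ 0)
    (W : Matrix (Fin (k * ℓ)) (Fin (k * ℓ)) ℂ) (hWu : IsUnit W)
    (hWk : W ^ k = c • (1 : Matrix (Fin (k * ℓ)) (Fin (k * ℓ)) ℂ))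
    (X : Fin ℓ → Matrix (Fin (k * ℓ)) (Fin (k * ℓ)) ℂ)
    (hX : ∀ i, IsUnit (X i) ∧ (X i - 1).rank = 1)
    (hker : (⨅ (j : Fin k) (i : Fin ℓ),
        LinearMap.ker
          ((W ^ (k - 1 - (j : ℕ)) * X i * (W ^ (k - 1 - (j : ℕ)))⁻¹ - 1).mulVecLin)) = ⊥) :
    ∃ P : Matrix (Fin (k * ℓ)) (Fin (k * ℓ)) ℂ, IsUnit P ∧
      W = P *
        (Matrix.reindex finProdFinEquiv finProdFinEquiv
          (Matrix.of fun p q : Fin k × Fin ℓ =>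
            if (q.1 : ℕ) = (p.1 : ℕ) + 1 ∧ p.2 = q.2 then (1 : ℂ)
            else if (p.1 : ℕ) = k - 1 ∧ (q.1 : ℕ) = 0 ∧ p.2 = q.2 then c
            else 0)) * P⁻¹ := by
  choose u v huv using fun i => rank_one_aux (X i - 1) (hX i).2
  set B := (Matrix.of fun p q : Fin k × Fin ℓ =>
            if (q.1 : ℕ) = (p.1 : ℕ) + 1 ∧ p.2 = q.2 then (1 : ℂ)
            else if (p.1 : ℕ) = k - 1 ∧ (q.1 : ℕ) = 0 ∧ p.2 = q.2 then c
            else 0) with hB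
  let Q : Matrix (Fin (k * ℓ)) (Fin (k * ℓ)) ℂ := Matrix.of fun a =>
    Matrix.vecMul (v (finProdFinEquiv.symm a).2) (W ^ ((finProdFinEquiv.symm a).1 : ℕ))
  have hQrow : ∀ (p : Fin k) (i : Fin ℓ),
      Q (finProdFinEquiv (p, i)) = Matrix.vecMul (v i) (W ^ (p : ℕ)) := by
    intro p i
    funext b
    simp only [Q, Matrix.of_apply, Equiv.symm_apply_apply]
  have hQ0 : ∀ x, Q.mulVec x = 0 → x = 0 := by
    intro x hx
    have hx' : ∀ (p : Fin k) (i : Fin ℓ), v i ⬝ᵥ (W ^ (p : ℕ)).mulVec x = 0 := by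
      intro p i
      have := congrFun hx (finProdFinEquiv (p, i))
      rw [Matrix.mulVec, hQrow] at this
      rw [Matrix.dotProduct_mulVec]
      exact this
    rw [← Submodule.mem_bot ℂ, ← hker]
    simp only [Submodule.mem_iInf, LinearMap.mem_ker, Matrix.mulVecLin_apply]
    intro j i
    obtain ⟨p, d, hpd⟩ := inv_aux c hc W hWk (k - 1 - (j : ℕ)) (by omega)
    have hu : IsUnit (W ^ (k - 1 - (j : ℕ))) := hWu.pow _
    have e1 : W ^ (k - 1 - (j : ℕ)) * X i * (W ^ (k - 1 - (j : ℕ)))⁻¹ - 1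
        = W ^ (k - 1 - (j : ℕ)) * (Matrix.vecMulVec (u i) (v i) * (W ^ (k - 1 - (j : ℕ)))⁻¹) := by
      rw [← huv, sub_mul, mul_sub, one_mul,
        Matrix.mul_nonsing_inv _ ((Matrix.isUnit_iff_isUnit_det _).1 hu), mul_assoc]
    rw [e1, hpd, ← Matrix.mulVec_mulVec, ← Matrix.mulVec_mulVec, Matrix.smul_mulVec,
      Matrix.mulVec_smul, Matrix.vecMulVec_mulVec, hx' p i]
    simp
  have hQu : IsUnit Q := by
    rw [← Matrix.mulVec_injective_iff_isUnit]
    intro x y hxy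
    rw [← sub_eq_zero]
    apply hQ0
    rw [Matrix.mulVec_sub]
    exact sub_eq_zero.2 hxy
  have hQW : Q * W = Matrix.reindex finProdFinEquiv finProdFinEquiv B * Q := by
    ext a b
    obtain ⟨⟨p, i⟩, rfl⟩ := finProdFinEquiv.surjective a
    have hl : (Q * W) (finProdFinEquiv (p, i)) b = Matrix.vecMul (v i) (W ^ ((p : ℕ) + 1)) b := by
      rw [pow_succ, ← Matrix.vecMul_vecMul, ← hQrow]
      rfl
    have hr : (Matrix.reindex finProdFinEquiv finProdFinEquiv B * Q) (finProdFinEquiv (p, i)) b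
        = ∑ q, B (p, i) q * Q (finProdFinEquiv q) b := by
      rw [Matrix.mul_apply, ← finProdFinEquiv.sum_comp]
      simp
    rw [hl, hr]
    by_cases h : (p : ℕ) + 1 < k
    · have hb : ∀ q, B (p, i) q = if q = (⟨(p : ℕ) + 1, h⟩, i) then 1 else 0 := by
        rintro ⟨q, r⟩
        simp only [hB, Matrix.of_apply, Prod.mk.injEq, Fin.ext_iff]
        have : (p : ℕ) ≠ k - 1 := by omega
        simp [this, eq_comm]
      simp [hb, hQrow]
    · have hp : (p : ℕ) + 1 = k := by omega
      have hb : ∀ q, B (p, i) q = if q = (⟨0, hk⟩, i) then c else 0 := by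
        rintro ⟨q, r⟩
        simp only [hB, Matrix.of_apply, Prod.mk.injEq, Fin.ext_iff]
        have h1 : (p : ℕ) = k - 1 := by omega
        have h2 : (q : ℕ) ≠ (p : ℕ) + 1 := by omega
        simp only [h2, false_and, if_false]
        simp [h1, eq_comm]
      rw [hp, hWk]
      simp [hb, hQrow, Matrix.vecMul_smul]
  have hd := (Matrix.isUnit_iff_isUnit_det _).1 hQu
  refine ⟨Q⁻¹, Matrix.isUnit_nonsing_inv_iff.2 hQu, ?_⟩
  rw [Matrix.nonsing_inv_nonsing_inv _ hd, mul_assoc, ← hQW, ← mul_assoc,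
    Matrix.nonsing_inv_mul _ hd, one_mul]
end

section
/- Let k ≥ 1, let ε be a nonzero complex number, let r be an integer, and let λ₁, ξ₁, …, ξ_k be nonzero complex numbers such that: λ₁ ≠ 1; the ξ_j are pairwise distinct; ξ_j^k ≠ ε^r for all j; ξ₁ + ⋯ + ξ_k ≠ 0; and λ₁·ξ₁⋯ξ_k = (−1)^{k−1}·ε^r. Then there exist matrices Ω₀, A₁ ∈ GL_k(ℂ) such that: (1) Ω₀^k = ε^r·I_k and the eigenvalues of Ω₀ are exactly the k distinct k-th roots of ε^r; (2) A₁ is a pseudo-reflection with special eigenvalue λ₁; (3) A₁^{−1}·Ω₀ is diagonalizable with eigenvalues ξ₁, …, ξ_k; (4) the family {Ω₀, A₁} acts irreducibly on ℂ^k. -/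
open Matrix Polynomial in
lemma aux_det {k : ℕ} (d w : Fin k → ℂ) (j : Fin k) (hd : d j = 0) :
    (Matrix.of fun a b => Matrix.diagonal d a b - w b).det
      = - w j * ∏ i ∈ Finset.univ.erase j, d i := by
  have h : (Matrix.of fun a b => Matrix.diagonal d a b - w b).det
      = ((Matrix.diagonal d).updateRow j (fun b => - w b)).det := by
    refine Matrix.det_eq_of_forall_row_eq_smul_add_const
      (fun i => if i = j then 0 else 1) j (by simp) ?_
    intro a b
    by_cases hab : a = j
    · subst hab
      by_cases hb : a = b
      · subst hb; simp [hd]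
      · simp [hb]
    · simp [hab, Matrix.updateRow_ne, sub_eq_add_neg]
  rw [h, ← Matrix.cramer_transpose_apply, Matrix.cramer_eq_adjugate_mulVec,
    Matrix.diagonal_transpose, Matrix.adjugate_diagonal, Matrix.mulVec_diagonal]
  ring

open Matrix Polynomial in
lemma aux_charpoly {k : ℕ} (hk : 1 ≤ k) (c : ℂ) (ξ w : Fin k → ℂ) (hξinj : Function.Injective ξ)
    (hw : ∀ j, w j * ∏ i ∈ Finset.univ.erase j, (ξ j - ξ i) = - (ξ j ^ k - c)) :
    (Matrix.of fun a b => Matrix.diagonal ξ a b + w b).charpoly = X ^ k - C c := by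
  have hk0 : k ≠ 0 := by omega
  refine Polynomial.eq_of_degree_sub_lt_of_eval_index_eq Finset.univ (v := ξ) hξinj.injOn ?_ ?_
  · have h1 := Matrix.charpoly_degree_eq_dim (Matrix.of fun a b => Matrix.diagonal ξ a b + w b)
    have h2 : (X ^ k - C c : ℂ[X]).degree = k := degree_X_pow_sub_C (by omega) c
    have h3 := degree_sub_lt (h1.trans (by rw [h2]; simp)) (Matrix.charpoly_monic _).ne_zero
      ((Matrix.charpoly_monic _).leadingCoeff.trans (monic_X_pow_sub_C c hk0).leadingCoeff.symm)
    rw [h1] at h3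
    simpa using h3
  · intro j _
    rw [Matrix.eval_charpoly]
    have h := aux_det (fun i => ξ j - ξ i) w j (by simp)
    have e : (Matrix.scalar (Fin k) (ξ j) - Matrix.of fun a b => Matrix.diagonal ξ a b + w b)
       = (Matrix.of fun a b => Matrix.diagonal (fun i => ξ j - ξ i) a b - w b) := by
      ext a b
      by_cases hab : a = b
      · subst hab; simp; ring
      · simp [hab]
    rw [e, h, neg_mul, hw]; simp

open Matrix Polynomial in
lemma aux_inv {k : ℕ} (ξ : Fin k → ℂ) (hξinj : Function.Injective ξ)
    (U : Submodule ℂ (Fin k → ℂ)) (hU : ∀ x ∈ U, (Matrix.diagonal ξ) *ᵥ x ∈ U)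
    (x : Fin k → ℂ) (hx : x ∈ U) (j : Fin k) (hj : x j ≠ 0) : Pi.single j (1:ℂ) ∈ U := by
  have key : ∀ s : Finset (Fin k), (fun i => (∏ l ∈ s, (ξ i - ξ l)) * x i) ∈ U := by
    intro s
    induction s using Finset.induction_on with
    | empty => simpa using hx
    | insert a s ha ih =>
      have := U.sub_mem (hU _ ih) (U.smul_mem (ξ a) ih)
      convert this using 1
      ext i
      simp [Finset.prod_insert ha, Matrix.mulVec_diagonal]
      ring
  have h := key (Finset.univ.erase j)
  have hp : ∏ l ∈ Finset.univ.erase j, (ξ j - ξ l) ≠ 0 := by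
    refine Finset.prod_ne_zero_iff.2 fun l hl => sub_ne_zero.2 fun h => ?_
    exact (Finset.ne_of_mem_erase hl) (hξinj h).symm
  have h2 := U.smul_mem ((∏ l ∈ Finset.univ.erase j, (ξ j - ξ l)) * x j)⁻¹ h
  convert h2 using 1
  ext i
  by_cases hij : i = j
  · subst hij; simp; field_simp
  · have : ∏ l ∈ Finset.univ.erase j, (ξ i - ξ l) = 0 :=
      Finset.prod_eq_zero (i := i) (by simp [hij]) (by simp)
    simp [hij, this]


/-- construction of the monodromy matrices of an irreducible rigid
Pochhammer local system of multiplicity one on the turbine without shaft T_{n,k,1}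
with prescribed numerical local data (ε; λ₁; ξ₁, …, ξ_k; 1, …, 1). -/
theorem stmt_11 {k : ℕ} (hk : 1 ≤ k) (ε : ℂ) (hε : ε ≠ 0) (r : ℤ)
    (lam : ℂ) (ξ : Fin k → ℂ)
    (hlam0 : lam ≠ 0) (hlam1 : lam ≠ 1)
    (hξ0 : ∀ j, ξ j ≠ 0) (hξinj : Function.Injective ξ)
    (hξk : ∀ j, ξ j ^ k ≠ ε ^ r)
    (hξsum : ∑ j, ξ j ≠ 0)
    (hfuchs : lam * ∏ j, ξ j = (-1 : ℂ) ^ (k - 1) * ε ^ r) :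
    ∃ Ω A : Matrix (Fin k) (Fin k) ℂ,
      IsUnit Ω ∧ IsUnit A ∧
      Ω ^ k = (ε ^ r) • (1 : Matrix (Fin k) (Fin k) ℂ) ∧
      spectrum ℂ Ω = {z : ℂ | z ^ k = ε ^ r} ∧
      (A - 1).rank = 1 ∧ A.det = lam ∧
      (∃ P : Matrix (Fin k) (Fin k) ℂ, IsUnit P ∧
        A⁻¹ * Ω = P * Matrix.diagonal ξ * P⁻¹) ∧
      (∀ U : Submodule ℂ (Fin k → ℂ),
        U.map Ω.mulVecLin ≤ U → U.map A.mulVecLin ≤ U → U = ⊥ ∨ U = ⊤) := by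
  classical
  set c : ℂ := ε ^ r with hc
  have hc0 : c ≠ 0 := zpow_ne_zero _ hε
  have hk0 : k ≠ 0 := by omega
  have hp : ∀ j, ∏ l ∈ Finset.univ.erase j, (ξ j - ξ l) ≠ 0 := fun j =>
    Finset.prod_ne_zero_iff.2 fun l hl => sub_ne_zero.2 fun h =>
      (Finset.ne_of_mem_erase hl) (hξinj h).symm
  obtain ⟨w, hw⟩ : ∃ w : Fin k → ℂ,
      ∀ j, w j * ∏ i ∈ Finset.univ.erase j, (ξ j - ξ i) = - (ξ j ^ k - c) :=
    ⟨fun j => - (ξ j ^ k - c) / ∏ i ∈ Finset.univ.erase j, (ξ j - ξ i),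
      fun j => div_mul_cancel₀ _ (hp j)⟩
  have hw0 : ∀ j, w j ≠ 0 := by
    intro j h
    have := hw j
    rw [h, zero_mul] at this
    exact hξk j (by linear_combination this)
  have hcp := aux_charpoly hk c ξ w hξinj hw
  set Ω : Matrix (Fin k) (Fin k) ℂ := Matrix.of fun a b => Matrix.diagonal ξ a b + w b with hΩ
  set A : Matrix (Fin k) (Fin k) ℂ := 1 + Matrix.vecMulVec 1 (fun j => w j / ξ j) with hA
  have hAD : A * Matrix.diagonal ξ = Ω := by
    ext a b
    rw [Matrix.mul_diagonal]
    have := hξ0 b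
    by_cases hab : a = b
    · subst hab; simp [hA, hΩ, Matrix.vecMulVec_apply, add_mul, this]
    · simp [hA, hΩ, Matrix.vecMulVec_apply, hab, this]
  have hξp : ∏ j, ξ j ≠ 0 := Finset.prod_ne_zero_iff.2 fun j _ => hξ0 j
  have hdetΩ : Ω.det = (-1 : ℂ) ^ (k - 1) * c := by
    rw [Matrix.det_eq_sign_charpoly_coeff, hcp]
    obtain ⟨m, rfl⟩ : ∃ m, k = m + 1 := ⟨k - 1, by omega⟩
    simp [pow_succ]
  have hdetA : A.det = lam := by
    have h := congrArg Matrix.det hAD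
    rw [Matrix.det_mul, Matrix.det_diagonal, hdetΩ, ← hfuchs] at h
    exact mul_right_cancel₀ hξp h
  have hAu : IsUnit A.det := by rw [hdetA]; exact hlam0.isUnit
  have hAinv : A⁻¹ * Ω = Matrix.diagonal ξ := by
    rw [← hAD, Matrix.nonsing_inv_mul_cancel_left _ _ hAu]
  have j0 : Fin k := ⟨0, by omega⟩
  have hv0 : ∀ j, w j / ξ j ≠ 0 := fun j => div_ne_zero (hw0 j) (hξ0 j)
  have hAx : ∀ x : Fin k → ℂ, A.mulVec x = x + ((fun j => w j / ξ j) ⬝ᵥ x) • 1 := by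
    intro x
    rw [hA, Matrix.add_mulVec, Matrix.one_mulVec, Matrix.vecMulVec_mulVec]
    simp
  refine ⟨Ω, A, ?_, ?_, ?_, ?_, ?_, hdetA, ⟨1, isUnit_one, by simp [hAinv]⟩, ?_⟩
  · rw [Matrix.isUnit_iff_isUnit_det, hdetΩ]
    exact (mul_ne_zero (pow_ne_zero _ (by simp)) hc0).isUnit
  · rwa [Matrix.isUnit_iff_isUnit_det]
  · have h := Matrix.aeval_self_charpoly Ω
    rw [hcp] at h
    simp only [map_sub, map_pow, Polynomial.aeval_X, Polynomial.aeval_C, sub_eq_zero] at h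
    rw [h, Algebra.algebraMap_eq_smul_one]
  · ext z
    rw [Matrix.mem_spectrum_iff_isRoot_charpoly, hcp]
    simp [sub_eq_zero]
  · rw [hA, add_sub_cancel_left]
    refine le_antisymm (Matrix.rank_vecMulVec_le _ _) ?_
    rw [Nat.one_le_iff_ne_zero]
    intro h
    have h1 : LinearMap.range (Matrix.vecMulVec 1 (fun j => w j / ξ j)).mulVecLin = ⊥ :=
      Submodule.finrank_eq_zero.1 h
    have h2 : (Matrix.vecMulVec (1 : Fin k → ℂ) (fun j => w j / ξ j)).mulVecLin (Pi.single j0 1) = 0 := by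
      rw [LinearMap.range_eq_bot.1 h1]; rfl
    have h3 := congrFun h2 j0
    simp [Matrix.vecMulVec_apply] at h3
    exact h3.elim (hw0 j0) (hξ0 j0)
  · intro U hUΩ hUA
    by_cases hbot : U = ⊥
    · exact Or.inl hbot
    right
    obtain ⟨x, hx, hx0⟩ := U.ne_bot_iff.1 hbot
    have hinj : Function.Injective A.mulVecLin :=
      Matrix.mulVec_injective_iff_isUnit.2 ((Matrix.isUnit_iff_isUnit_det A).2 hAu)
    have hmap : U.map A.mulVecLin = U :=
      Submodule.eq_of_le_of_finrank_eq hUA (Submodule.equivMapOfInjective _ hinj U).finrank_eq.symm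
    have hD : ∀ y ∈ U, (Matrix.diagonal ξ).mulVec y ∈ U := by
      intro y hy
      have h1 : Ω.mulVec y ∈ U := hUΩ ⟨y, hy, rfl⟩
      rw [← hmap] at h1
      obtain ⟨z, hz, hz2⟩ := h1
      have : z = (Matrix.diagonal ξ).mulVec y := by
        apply hinj
        rw [hz2, ← hAD]
        simp
      exact this ▸ hz
    obtain ⟨j, hj⟩ := Function.ne_iff.1 hx0
    have hej := aux_inv ξ hξinj U hD x hx j hj
    have h1 : A.mulVec (Pi.single j 1) ∈ U := hUA ⟨_, hej, rfl⟩
    rw [hAx] at h1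
    have h2 := (U.add_mem_iff_right hej).1 h1
    have h3 : (1 : Fin k → ℂ) ∈ U := by
      refine (U.smul_mem_iff ?_).1 h2
      simpa using hv0 j
    rw [eq_top_iff]
    intro y _
    have : y = ∑ i, y i • (Pi.single i (1:ℂ) : Fin k → ℂ) := by
      ext a; simp [Finset.sum_apply, Pi.single_apply]
    rw [this]
    exact U.sum_mem fun i _ => U.smul_mem _ (aux_inv ξ hξinj U hD 1 h3 i (by simp))
end

section
/- Let k, ℓ ≥ 1 be integers, m = kℓ + 1, let ε be a nonzero complex number, let r be an integer, and let b, λ₁, …, λ_ℓ, ξ₁, …, ξ_{k+1} be nonzero complex numbers. Set η₁ = (−1)^{k−1}·ε^r·(ξ₁⋯ξ_k)^{−1} and η₂ = (−1)^k·ε^r·b·(ξ₁⋯ξ_{k+1})^{−1}. Assume: λ_i ≠ 1 and λ_i ≠ η₁ for all i; η₁ ≠ 1; η₂ ≠ 1; η₁ ≠ η₂; the ξ_j are pairwise distinct; ξ_j ≠ b for all j; b^k ≠ ε^r and ξ_j^k ≠ ε^r for all j; ξ₁ + ⋯ + ξ_k ≠ 0; and the Fuchs relation λ₁⋯λ_ℓ·ξ₁^ℓ⋯ξ_k^ℓ·ξ_{k+1}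 = (−1)^{(k−1)ℓ}·b·ε^{rℓ}. Then there exist pseudo-reflections X₁, …, X_ℓ ∈ GL_m(ℂ) with special eigenvalues λ₁, …, λ_ℓ respectively, and a matrix Ω₀ ∈ GL_m(ℂ), such that: (1) ε^r·Ω₀^{−k} is a pseudo-reflection with special eigenvalue ε^r·b^{−k}; (2) Ω∞ := (X₁⋯X_ℓ)^{−1}·Ω₀ is diagonalizable, with eigenvalues ξ₁, …, ξ_k each of multiplicity ℓ and ξ_{k+1} of multiplicity 1; (3) the family {X₁, …, X_ℓ, Ω₀} acts irreducibly on ℂ^m. -/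
open Matrix

lemma prod_lem {J : Type*} [Fintype J] [DecidableEq J] : ∀ (n : ℕ) (w ψ Φ : Fin n → J → ℂ) (β : Fin n → ℂ)
    (_ : ∀ i, ψ i = Φ i - β i • ∑ j, if i < j then Φ j else 0)
    (_ : ∀ i j, i < j → ψ i ⬝ᵥ w j = β i),
    (List.ofFn (fun i => (1 : Matrix J J ℂ) + vecMulVec (w i) (ψ i))).prod
      = 1 + ∑ i, vecMulVec (w i) (Φ i) := by
  intro n
  induction n with
  | zero => intros; simp
  | succ n ih =>
    intro w ψ Φ β h1 h2
    rw [List.ofFn_succ, List.prod_cons,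
      ih (fun i => w i.succ) (fun i => ψ i.succ) (fun i => Φ i.succ) (fun i => β i.succ)
        (fun i => by rw [h1 i.succ, Fin.sum_univ_succ]; simp [Fin.succ_lt_succ_iff])
        (fun i j hij => h2 _ _ (Fin.succ_lt_succ_iff.2 hij)), Fin.sum_univ_succ]
    have h0 : ψ 0 = Φ 0 - β 0 • ∑ j : Fin n, Φ j.succ := by
      rw [h1 0, Fin.sum_univ_succ]; simp
    have e1 : vecMulVec (w 0) (ψ 0) * ∑ i : Fin n, vecMulVec (w i.succ) (Φ i.succ)
        = β 0 • ∑ i : Fin n, vecMulVec (w 0) (Φ i.succ) := by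
      rw [Finset.mul_sum, Finset.smul_sum]
      refine Finset.sum_congr rfl fun i _ => ?_
      rw [vecMulVec_mul_vecMulVec, h2 0 i.succ (Fin.succ_pos i)]
      ext a b; simp [vecMulVec_apply]; ring
    have e2 : vecMulVec (w 0) (ψ 0) = vecMulVec (w 0) (Φ 0)
        - β 0 • ∑ i : Fin n, vecMulVec (w 0) (Φ i.succ) := by
      rw [h0]; ext a b
      simp [vecMulVec_apply, Matrix.sum_apply, Finset.mul_sum]
      rw [mul_sub, Finset.mul_sum]; congr 1; 
      refine Finset.sum_congr rfl fun i _ => ?_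
      ring
    rw [add_mul, one_mul, mul_add, mul_one, e1, e2]
    abel

lemma u_lem (η : ℂ) (hη : η ≠ 0) : ∀ (n : ℕ) (lam : Fin n → ℂ), ∃ u : Fin n → ℂ,
    (∀ i, u i - (lam i - η) / η * (∑ j, if i < j then u j else 0) = lam i - η) ∧
    η + ∑ i, u i = η * ∏ i, (lam i / η) := by
  intro n
  induction n with
  | zero => intro lam; exact ⟨fun _ => 0, by simp, by simp⟩
  | succ n ih =>
    intro lam
    obtain ⟨u, h1, h2⟩ := ih (fun i => lam i.succ)
    refine ⟨Fin.cons ((lam 0 - η) + (lam 0 - η) / η * ∑ j, u j) u, ?_, ?_⟩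
    · intro i
      refine Fin.cases ?_ (fun i => ?_) i
      · simp [Fin.sum_univ_succ]
      · have := h1 i
        simpa [Fin.sum_univ_succ, Fin.succ_lt_succ_iff] using this
    · rw [Fin.sum_univ_succ, Fin.prod_univ_succ]
      simp only [Fin.cons_zero, Fin.cons_succ]
      have : ∑ i, u i = η * ∏ i : Fin n, (lam i.succ / η) - η := by linear_combination h2
      rw [this]; field_simp; ring

lemma Q_lem (η s : ℂ) {n : ℕ} (u : Fin (n+1) → ℂ) (hs : ∑ i, u i = s) (hs0 : s ≠ 0) :
    ∃ Q : Matrix (Fin (n+1)) (Fin (n+1)) ℂ, IsUnit Q.det ∧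
      Q * diagonal (Fin.cons (η + s - 1) (fun _ => η - 1)) =
        ((η - 1) • 1 + vecMulVec u (fun _ => 1)) * Q := by
  refine ⟨Matrix.of fun i j => Fin.cases (u i) (fun a : Fin n => (if i = a.succ then 1 else 0) - (if i = 0 then 1 else 0)) j, ?_, ?_⟩
  · rw [isUnit_iff_ne_zero, Ne, ← Matrix.exists_mulVec_eq_zero_iff]
    rintro ⟨v, hv, h⟩
    apply hv
    have hi : ∀ i, u i * v 0 + ∑ a : Fin n, ((if i = a.succ then 1 else 0) - (if i = 0 then (1:ℂ) else 0)) * v a.succ = 0 := by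
      intro i
      have := congrFun h i
      simpa [mulVec, dotProduct, Fin.sum_univ_succ] using this
    have h0 := hi 0
    have h1 : ∀ a : Fin n, u a.succ * v 0 + v a.succ = 0 := by
      intro a
      have := hi a.succ
      simpa [Fin.succ_inj, Fin.succ_ne_zero] using this
    simp [(Fin.succ_ne_zero _).symm] at h0
    have h2 : s * v 0 = 0 := by
      rw [← hs, Fin.sum_univ_succ, add_mul, Finset.sum_mul]
      have : ∑ i : Fin n, (u i.succ * v 0 + v i.succ) = 0 := Finset.sum_eq_zero fun a _ => h1 a
      rw [Finset.sum_add_distrib] at this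
      linear_combination h0 + this
    have h3 : v 0 = 0 := by simpa [hs0] using h2
    funext i
    refine Fin.cases h3 (fun a => ?_) i
    simpa [h3] using h1 a
  · rw [add_mul, smul_mul_assoc, one_mul]
    ext i j
    rw [mul_diagonal, Matrix.add_apply, Matrix.smul_apply, vecMulVec_mul, vecMulVec_apply]
    refine Fin.cases ?_ (fun a => ?_) j
    · simp [vecMul, dotProduct, hs]; ring
    · simp [vecMul, dotProduct]; ring

lemma phi_lem {n : ℕ} (hn : 1 ≤ n) (ξ : Fin n → ℂ) (hinj : Function.Injective ξ) (h0 : ∀ j, ξ j ≠ 0) :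
    ∃ φ : Fin n → ℂ, (∀ i < n, ∑ j, φ j * ξ j ^ i = if i = n - 1 then 1 else 0) ∧
      ∑ j, φ j * (ξ j)⁻¹ = - ((-1) ^ n * ∏ j, ξ j)⁻¹ := by
  have hdet : IsUnit (vandermonde ξ).det := by
    rw [isUnit_iff_ne_zero]; exact det_vandermonde_ne_zero_iff.2 hinj
  let φ : Fin n → ℂ := (vandermonde ξ)⁻¹ ⟨n-1, by omega⟩
  have hφ : ∀ i < n, ∑ j, φ j * ξ j ^ i = if i = n - 1 then 1 else 0 := by
    intro i hi
    have := congrFun (congrFun (nonsing_inv_mul _ hdet) ⟨n-1, by omega⟩) ⟨i, hi⟩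
    rw [Matrix.mul_apply, Matrix.one_apply] at this
    simpa [φ, vandermonde_apply, Fin.ext_iff, eq_comm] using this
  refine ⟨φ, hφ, ?_⟩
  let Q : Polynomial ℂ := ∏ j, (Polynomial.X - Polynomial.C (ξ j))
  have hQdeg : Q.natDegree = n := by simp [Q]
  have hQm : Q.Monic := Polynomial.monic_prod_of_monic _ _ fun j _ => Polynomial.monic_X_sub_C _
  have hQ0 : Q.coeff 0 = (-1) ^ n * ∏ j, ξ j := by
    rw [Polynomial.coeff_zero_eq_eval_zero, Polynomial.eval_prod]
    simp [Finset.prod_neg]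
  have hroot : ∀ j, Q.eval (ξ j) = 0 := by
    intro j
    rw [Polynomial.eval_prod]; exact Finset.prod_eq_zero (Finset.mem_univ j) (by simp)
  have hQne : Q.coeff 0 ≠ 0 := by
    rw [hQ0]; exact mul_ne_zero (by simp) (Finset.prod_ne_zero_iff.2 fun j _ => h0 j)
  have key : ∀ j, (ξ j)⁻¹ = - (Q.coeff 0)⁻¹ * ∑ i ∈ Finset.range n, Q.coeff (i+1) * ξ j ^ i := by
    intro j
    have := hroot j
    rw [Polynomial.eval_eq_sum_range, hQdeg, Finset.sum_range_succ'] at this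
    have h1 : ∑ i ∈ Finset.range n, Q.coeff (i+1) * ξ j ^ (i+1) = ξ j * ∑ i ∈ Finset.range n, Q.coeff (i+1) * ξ j ^ i := by
      rw [Finset.mul_sum]; exact Finset.sum_congr rfl fun i _ => by ring
    rw [h1] at this
    have hj := h0 j
    field_simp
    linear_combination this
  have : ∑ j, φ j * (ξ j)⁻¹ = - (Q.coeff 0)⁻¹ * ∑ i ∈ Finset.range n, Q.coeff (i+1) * ∑ j, φ j * ξ j ^ i := by
    simp_rw [key, Finset.mul_sum]
    rw [Finset.sum_comm]
    exact Finset.sum_congr rfl fun i _ => Finset.sum_congr rfl fun j _ => by ring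
  rw [this, ← hQ0]
  have : ∑ i ∈ Finset.range n, Q.coeff (i+1) * ∑ j, φ j * ξ j ^ i = 1 := by
    rw [Finset.sum_congr rfl (fun i hi => by rw [hφ i (Finset.mem_range.1 hi)])]
    rw [Finset.sum_eq_single (n-1)]
    · have : n - 1 + 1 = Q.natDegree := by omega
      simp [this, hQm.coeff_natDegree]
    · intro i _ h; simp [h]
    · intro h; exact absurd (Finset.mem_range.2 (by omega)) h
  rw [this]; ring

lemma ext_vand {n : ℕ} (ξ : Fin n → ℂ) (hinj : Function.Injective ξ) (Z Z' : Matrix (Fin n) (Fin n) ℂ)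
    (h : ∀ i < n, Z *ᵥ (fun j => ξ j ^ i) = Z' *ᵥ (fun j => ξ j ^ i)) : Z = Z' := by
  have hdet : IsUnit (vandermonde ξ).det := by
    rw [isUnit_iff_ne_zero]; exact det_vandermonde_ne_zero_iff.2 hinj
  have : Z * vandermonde ξ = Z' * vandermonde ξ := by
    ext a i
    have := congrFun (h i i.2) a
    simpa [mulVec, dotProduct, Matrix.mul_apply, vandermonde_apply] using this
  have h2 := congrArg (· * (vandermonde ξ)⁻¹) this
  simpa [Matrix.mul_assoc, mul_nonsing_inv _ hdet] using h2

lemma step_lem {n : ℕ} (ξ φ w : Fin n → ℂ) (i : ℕ) :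
    (diagonal ξ + vecMulVec w φ) *ᵥ (fun j => ξ j ^ i) =
      (fun j => ξ j ^ (i+1)) + (∑ j, φ j * ξ j ^ i) • w := by
  funext a
  simp [add_mulVec, mulVec_diagonal, vecMulVec_mulVec, dotProduct]
  ring

lemma pow_lem {n : ℕ} (ξ φ w : Fin n → ℂ)
    (hφ : ∀ i < n, ∑ j, φ j * ξ j ^ i = if i = n - 1 then 1 else 0) (i : ℕ) (hi : i < n) :
    (diagonal ξ + vecMulVec w φ) ^ i *ᵥ (fun _ => 1) = (fun j => ξ j ^ i) := by
  induction i with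
  | zero => simp
  | succ i ih =>
    rw [pow_succ', ← mulVec_mulVec, ih (by omega), step_lem, hφ i (by omega), if_neg (by omega)]
    simp

lemma M_lem {k : ℕ} (hk : 1 ≤ k) (c : ℂ) (ξ φ : Fin k → ℂ) (hinj : Function.Injective ξ)
    (hφ : ∀ i < k, ∑ j, φ j * ξ j ^ i = if i = k - 1 then 1 else 0) :
    (diagonal ξ + vecMulVec (fun j => -(ξ j ^ k - c)) φ) ^ k = c • (1 : Matrix (Fin k) (Fin k) ℂ) := by
  set A := diagonal ξ + vecMulVec (fun j => -(ξ j ^ k - c)) φ with hA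
  have h1 : A ^ k *ᵥ (fun _ => 1) = c • (fun _ => 1) := by
    obtain ⟨m, rfl⟩ : ∃ m, k = m + 1 := ⟨k - 1, by omega⟩
    rw [pow_succ', ← mulVec_mulVec, pow_lem ξ φ _ hφ m (by omega), hA, step_lem, hφ m (by omega)]
    funext j; simp
  apply ext_vand ξ hinj
  intro i hi
  rw [← pow_lem ξ φ (fun j => -(ξ j ^ k - c)) hφ i hi, ← hA, mulVec_mulVec, ← pow_add, add_comm, pow_add,
    ← mulVec_mulVec, h1, mulVec_smul, smul_mulVec, one_mulVec]

lemma N_lem {k : ℕ} (hk : 1 ≤ k) (c b : ℂ) (ξ φ : Fin (k+1) → ℂ) (hinj : Function.Injective ξ)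
    (hφ : ∀ i < k+1, ∑ j, φ j * ξ j ^ i = if i = k + 1 - 1 then 1 else 0) :
    ∃ p q, (diagonal ξ + vecMulVec (fun j => -((ξ j ^ k - c) * (ξ j - b))) φ) ^ k =
        c • (1 : Matrix (Fin (k+1)) (Fin (k+1)) ℂ) + vecMulVec p q ∧
      (diagonal ξ + vecMulVec (fun j => -((ξ j ^ k - c) * (ξ j - b))) φ) *ᵥ p = b • p := by
  have hdet : IsUnit (vandermonde ξ).det := by
    rw [isUnit_iff_ne_zero]; exact det_vandermonde_ne_zero_iff.2 hinj
  have hpow := pow_lem ξ φ (fun j => -((ξ j ^ k - c) * (ξ j - b))) hφ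
  have hstep := step_lem ξ φ (fun j => -((ξ j ^ k - c) * (ξ j - b)))
  set A := diagonal ξ + vecMulVec (fun j => -((ξ j ^ k - c) * (ξ j - b))) φ with hA
  have hp : A *ᵥ (fun j => ξ j ^ k - c) = b • (fun j => ξ j ^ k - c) := by
    have e : (fun j => ξ j ^ k - c) = (fun j => ξ j ^ k) - c • (fun j => ξ j ^ 0) := by
      funext j; simp
    have g0 : ∑ j, φ j * ξ j ^ 0 = 0 := by rw [hφ 0 (by omega), if_neg (by omega)]
    have gk : ∑ j, φ j * ξ j ^ k = 1 := by rw [hφ k (by omega), if_pos (by omega)]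
    rw [e, mulVec_sub, mulVec_smul, hstep, hstep, g0, gk]
    funext j; simp; ring
  have hpi : ∀ i : ℕ, A ^ i *ᵥ (fun j => ξ j ^ k - c) = b ^ i • (fun j => ξ j ^ k - c) := by
    intro i
    induction i with
    | zero => simp
    | succ i ih => rw [pow_succ, ← mulVec_mulVec, hp, mulVec_smul, ih, smul_smul, pow_succ']
  refine ⟨fun j => ξ j ^ k - c, (fun i : Fin (k+1) => b ^ (i : ℕ)) ᵥ* (vandermonde ξ)⁻¹, ?_, hp⟩
  apply ext_vand ξ hinj
  intro i hi
  have hq : ((fun i : Fin (k+1) => b ^ (i : ℕ)) ᵥ* (vandermonde ξ)⁻¹) ⬝ᵥ (fun j => ξ j ^ i) = b ^ i := by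
    have : ((fun i : Fin (k+1) => b ^ (i : ℕ)) ᵥ* (vandermonde ξ)⁻¹) ᵥ* vandermonde ξ = (fun i : Fin (k+1) => b ^ (i : ℕ)) := by
      rw [vecMul_vecMul, nonsing_inv_mul _ hdet, vecMul_one]
    have := congrFun this ⟨i, hi⟩
    simpa [vecMul, vandermonde_apply, dotProduct] using this
  rw [add_mulVec, smul_mulVec, one_mulVec, vecMulVec_mulVec, hq]
  have : A ^ k *ᵥ (fun j => ξ j ^ i) = A ^ i *ᵥ (A ^ k *ᵥ (fun _ => 1)) := by
    rw [← hpow i hi, mulVec_mulVec, mulVec_mulVec, ← pow_add, ← pow_add, add_comm k i]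
  rw [this, hpow k (by omega)]
  have e : (fun j => ξ j ^ k) = (fun j => ξ j ^ k - c) + c • (fun _ => 1) := by
    funext j; simp
  rw [e, mulVec_add, hpi, mulVec_smul, hpow i hi]
  funext j
  simp; ring

lemma data_lem {k n : ℕ} (hk : 1 ≤ k) (c b : ℂ) (ξ : Fin (k+1) → ℂ) (η : ℂ)
    (hη : η = (-1 : ℂ) ^ (k - 1) * c * (∏ j : Fin k, ξ j.castSucc)⁻¹)
    (hinj : Function.Injective ξ) (h0 : ∀ j, ξ j ≠ 0) :
    ∃ (W : Matrix (Fin (k+1) ⊕ (Fin k × Fin n)) (Fin (n+1)) ℂ)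
      (Φ : Matrix (Fin (n+1)) (Fin (k+1) ⊕ (Fin k × Fin n)) ℂ) (p q : _),
      Φ * W = diagonal (Fin.cons (η * b / ξ (Fin.last k) - 1) (fun _ => η - 1)) ∧
      ((1 + W * Φ) * diagonal (Sum.elim ξ (fun x => ξ x.1.castSucc))) ^ k = c • 1 + vecMulVec p q ∧
      ((1 + W * Φ) * diagonal (Sum.elim ξ (fun x => ξ x.1.castSucc))) *ᵥ p = b • p := by
  have hinj' : Function.Injective (fun j : Fin k => ξ j.castSucc) :=
    hinj.comp (Fin.castSucc_injective k)
  have h0' : ∀ j : Fin k, ξ j.castSucc ≠ 0 := fun j => h0 _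
  obtain ⟨φ, hφ, hφi⟩ := phi_lem (by omega) ξ hinj h0
  obtain ⟨χ, hχ, hχi⟩ := phi_lem hk _ hinj' h0'
  obtain ⟨p, q, hN, hp⟩ := N_lem hk c b ξ φ hinj hφ
  have hM := M_lem hk c _ χ hinj' hχ
  have hs : ((-1:ℂ)) ^ k = - (-1) ^ (k-1) := by
    obtain ⟨m, rfl⟩ : ∃ m, k = m + 1 := ⟨k - 1, by omega⟩
    simp [pow_succ]
  have hsq : ((-1:ℂ) ^ (k-1))⁻¹ = (-1) ^ (k-1) := by rw [← inv_pow]; norm_num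
  let W : Matrix (Fin (k+1) ⊕ (Fin k × Fin n)) (Fin (n+1)) ℂ := Matrix.of fun i a =>
    Sum.elim (fun j => if a = 0 then -((ξ j ^ k - c) * (ξ j - b)) else 0)
      (fun x => if a = x.2.succ then -(ξ x.1.castSucc ^ k - c) else 0) i
  let Φ : Matrix (Fin (n+1)) (Fin (k+1) ⊕ (Fin k × Fin n)) ℂ := Matrix.of fun a i =>
    Sum.elim (fun j => if a = 0 then φ j * (ξ j)⁻¹ else 0)
      (fun x => if a = x.2.succ then χ x.1 * (ξ x.1.castSucc)⁻¹ else 0) i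
  have hA : (1 + W * Φ) * diagonal (Sum.elim ξ (fun x => ξ x.1.castSucc)) =
      fromBlocks (diagonal ξ + vecMulVec (fun j => -((ξ j ^ k - c) * (ξ j - b))) φ) 0 0
        (blockDiagonal fun _ : Fin n => 
          (diagonal (fun j : Fin k => ξ j.castSucc) + vecMulVec (fun j => -(ξ j.castSucc ^ k - c)) χ)) := by
    ext i j
    rw [mul_diagonal, Matrix.add_apply, Matrix.mul_apply]
    rcases i with i | ⟨i, s⟩ <;> rcases j with j | ⟨j, t⟩
    · have := h0 j
      simp [W, Φ, Matrix.one_apply, diagonal_apply, vecMulVec_apply, add_mul]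
      congr 1
      · split_ifs with h <;> simp [h]
      · field_simp
    · simp [W, Φ]
    · simp [W, Φ, (Fin.succ_ne_zero _).symm]
    · have := h0' j
      by_cases hst : s = t
      · subst hst
        simp [W, Φ, Matrix.one_apply, diagonal_apply, vecMulVec_apply, add_mul, blockDiagonal_apply]
        congr 1
        · split_ifs with h <;> simp [h]
        · field_simp
      · simp [W, Φ, blockDiagonal_apply, hst, Ne.symm hst]
  refine ⟨W, Φ, Sum.elim p 0, Sum.elim q 0, ?_, ?_, ?_⟩
  · have hx : ∀ a a' : Fin (n+1), (Φ * W) a a' =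
        (if a = 0 ∧ a' = 0 then ∑ j, φ j * (ξ j)⁻¹ * -((ξ j ^ k - c) * (ξ j - b)) else 0)
        + ∑ t : Fin n, if a = t.succ ∧ a' = t.succ then
          ∑ j, χ j * (ξ j.castSucc)⁻¹ * -(ξ j.castSucc ^ k - c) else 0 := by
      intro a a'
      rw [Matrix.mul_apply, Fintype.sum_sum_type, Fintype.sum_prod_type_right]
      congr 1
      · simp only [W, Φ, Matrix.of_apply, Sum.elim_inl]
        by_cases h : a = 0 <;> by_cases h' : a' = 0 <;> simp [h, h']
      · refine Finset.sum_congr rfl fun t _ => ?_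
        simp only [W, Φ, Matrix.of_apply, Sum.elim_inr]
        by_cases h : a = t.succ <;> by_cases h' : a' = t.succ <;> simp [h, h']
    have hNs : ∑ j, φ j * (ξ j)⁻¹ * -((ξ j ^ k - c) * (ξ j - b)) = η * b / ξ (Fin.last k) - 1 := by
      have : ∀ j, φ j * (ξ j)⁻¹ * -((ξ j ^ k - c) * (ξ j - b)) =
          - (φ j * ξ j ^ k) + b * (φ j * ξ j ^ (k-1)) + c * (φ j * ξ j ^ 0) - c * b * (φ j * (ξ j)⁻¹) := by
        intro j
        have := h0 j
        obtain ⟨m, rfl⟩ : ∃ m, k = m + 1 := ⟨k - 1, by omega⟩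
        simp
        field_simp; ring
      simp_rw [this, Finset.sum_sub_distrib, Finset.sum_add_distrib, Finset.sum_neg_distrib, ← Finset.mul_sum]
      rw [hφ k (by omega), hφ (k-1) (by omega), hφ 0 (by omega), hφi, if_pos (by omega),
        if_neg (by omega), if_neg (by omega), hη, Fin.prod_univ_castSucc, pow_succ, hs]
      simp only [mul_inv, neg_mul, mul_neg, inv_neg, hsq]
      field_simp; simp; ring
    have hMs : ∑ j, χ j * (ξ j.castSucc)⁻¹ * -(ξ j.castSucc ^ k - c) = η - 1 := by
      have : ∀ j, χ j * (ξ j.castSucc)⁻¹ * -(ξ j.castSucc ^ k - c) =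
          - (χ j * ξ j.castSucc ^ (k-1)) + c * (χ j * (ξ j.castSucc)⁻¹) := by
        intro j
        have := h0' j
        obtain ⟨m, rfl⟩ : ∃ m, k = m + 1 := ⟨k - 1, by omega⟩
        simp
        field_simp; ring
      simp_rw [this, Finset.sum_add_distrib, Finset.sum_neg_distrib, ← Finset.mul_sum]
      rw [hχ (k-1) (by omega), hχi, if_pos rfl, hη, hs]
      simp only [mul_inv, neg_mul, mul_neg, inv_neg, hsq]
      ring
    ext a a'
    rw [hx, hNs, hMs, diagonal_apply]
    refine Fin.cases ?_ (fun s => ?_) a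
    · refine Fin.cases ?_ (fun s' => ?_) a' <;> simp [(Fin.succ_ne_zero _).symm]
    · refine Fin.cases ?_ (fun s' => ?_) a'
      · simp [(Fin.succ_ne_zero _).symm]
      · by_cases h : s = s'
        · subst h; simp
        · simp only [Fin.succ_ne_zero, false_and, if_false, Fin.succ_inj, h, zero_add]
          exact Finset.sum_eq_zero fun t _ => if_neg (by rintro ⟨rfl, rfl⟩; exact h rfl)
  · rw [hA, fromBlocks_diagonal_pow, hN, ← blockDiagonal_pow]
    have : (fun _ : Fin n => (diagonal (fun j : Fin k => ξ j.castSucc) +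
      vecMulVec (fun j => -(ξ j.castSucc ^ k - c)) χ)) ^ k = fun _ => c • (1 : Matrix (Fin k) (Fin k) ℂ) := by
      funext t; exact hM
    rw [this]
    ext i j
    rcases i with i | ⟨i, s⟩ <;> rcases j with j | ⟨j, t⟩ <;>
      simp [vecMulVec_apply, blockDiagonal_apply, Matrix.one_apply]
    split_ifs <;> simp_all
  · rw [hA, fromBlocks_mulVec]
    simp only [Sum.elim_comp_inl, Sum.elim_comp_inr, hp, mulVec_zero, zero_mulVec, add_zero]
    funext i
    rcases i with i | i <;> simp

lemma my_rank_zero {J : Type*} [Fintype J] [DecidableEq J] (M : Matrix J J ℂ) :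
    M.rank = 0 ↔ M = 0 := by
  constructor
  · intro h
    have h1 : LinearMap.range M.mulVecLin = ⊥ := Submodule.finrank_eq_zero.1 h
    have h2 := LinearMap.range_eq_bot.1 h1
    ext i j
    have := congrFun (LinearMap.congr_fun h2 (Pi.single j 1)) i
    simpa using this
  · rintro rfl; exact rank_zero

lemma core_lem {J : Type*} [Fintype J] [DecidableEq J] {n k : ℕ} (W : Matrix J (Fin n) ℂ)
    (Φ : Matrix (Fin n) J ℂ) (d : J → ℂ) (hd : ∀ j, d j ≠ 0) (η b c : ℂ) (hη : η ≠ 0)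
    (lam : Fin n → ℂ) (hl0 : ∀ i, lam i ≠ 0) (hl1 : ∀ i, lam i ≠ 1) (hlη : ∀ i, lam i ≠ η)
    (u : Fin n → ℂ)
    (hu : ∀ i, u i - (lam i - η) / η * (∑ j, if i < j then u j else 0) = lam i - η)
    (hΦW : Φ * W = (η - 1) • 1 + vecMulVec u (fun _ => 1))
    (p q : J → ℂ)
    (hAk : ((1 + W * Φ) * diagonal d) ^ k = c • 1 + vecMulVec p q)
    (hAp : ((1 + W * Φ) * diagonal d) *ᵥ p = b • p)
    (hdk : ∀ j, d j ^ k ≠ c) (hdb : ∀ j, d j ≠ b) :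
    ∃ X : Fin n → Matrix J J ℂ,
      (∀ i, IsUnit (X i) ∧ (X i - 1).rank = 1 ∧ (X i).det = lam i) ∧
      (List.ofFn X).prod = 1 + W * Φ ∧
      (∀ U : Submodule ℂ (J → ℂ),
        (∀ i, U.map (X i).mulVecLin ≤ U) → U.map ((1 + W * Φ) * diagonal d).mulVecLin ≤ U →
          U = ⊥ ∨ U = ⊤) := by
  let w : Fin n → J → ℂ := fun i x => W x i
  let ψ : Fin n → J → ℂ := fun i => Φ i - ((lam i - η) / η) • ∑ j, if i < j then Φ j else 0
  have hΦw : ∀ i j, Φ i ⬝ᵥ w j = (if i = j then η - 1 else 0) + u i := by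
    intro i j
    have := congrFun (congrFun hΦW i) j
    simpa [Matrix.mul_apply, vecMulVec_apply, Matrix.one_apply, dotProduct, w] using this
  have hψw : ∀ i j, ψ i ⬝ᵥ w j = (if i = j then η - 1 else 0) + (lam i - η)
      - (lam i - η) / η * (if i < j then η - 1 else 0) := by
    intro i j
    simp only [ψ, sub_dotProduct, smul_dotProduct, sum_dotProduct, hΦw, smul_eq_mul]
    have : ∀ l, (if i < l then Φ l else 0) ⬝ᵥ w j =
        (if l = j then (if i < j then η - 1 else 0) else 0) + (if i < l then u l else 0) := by
      intro l
      by_cases h : i < l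
      · simp only [h, if_true, hΦw]
        by_cases h2 : l = j
        · subst h2; simp [h]
        · simp [h2]
      · by_cases h2 : l = j
        · subst h2; simp [h]
        · simp [h, h2]
    simp_rw [this, Finset.sum_add_distrib]
    rw [Finset.sum_ite_eq' Finset.univ j, if_pos (Finset.mem_univ j)]
    linear_combination hu i
  have hlt : ∀ i j, i < j → ψ i ⬝ᵥ w j = (lam i - η) / η := by
    intro i j h
    rw [hψw, if_neg h.ne, if_pos h]; field_simp; ring
  have heq : ∀ i, ψ i ⬝ᵥ w i = lam i - 1 := by
    intro i; rw [hψw]; simp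
  have hne : ∀ i j, i ≠ j → ψ i ⬝ᵥ w j ≠ 0 := by
    intro i j hij
    rcases lt_or_gt_of_ne hij with h | h
    · rw [hlt i j h]; exact div_ne_zero (sub_ne_zero.2 (hlη i)) hη
    · rw [hψw, if_neg hij, if_neg (not_lt.2 h.le)]; simpa using sub_ne_zero.2 (hlη i)
  have hWΦ : ∑ i, vecMulVec (w i) (Φ i) = W * Φ := by
    ext a e; simp [Matrix.sum_apply, vecMulVec_apply, Matrix.mul_apply, w]
  have hdet : ∀ i, ((1 : Matrix J J ℂ) + vecMulVec (w i) (ψ i)).det = lam i := by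
    intro i
    rw [vecMulVec_eq Unit, det_one_add_replicateCol_mul_replicateRow, heq]; ring
  have hprod : (List.ofFn (fun i => (1 : Matrix J J ℂ) + vecMulVec (w i) (ψ i))).prod = 1 + W * Φ := by
    rw [prod_lem n w ψ Φ (fun i => (lam i - η) / η) (fun i => rfl) hlt, hWΦ]
  have hCdet : (1 + W * Φ).det ≠ 0 := by
    rw [← hprod, ← Matrix.coe_detMonoidHom, map_list_prod]
    apply List.prod_ne_zero
    intro h
    simp only [List.map_ofFn, List.mem_ofFn, Function.comp, Matrix.coe_detMonoidHom, hdet] at h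
    obtain ⟨i, hi⟩ := h
    exact hl0 i hi
  refine ⟨fun i => 1 + vecMulVec (w i) (ψ i), fun i => ⟨?_, ?_, hdet i⟩, hprod, ?_⟩
  · rw [Matrix.isUnit_iff_isUnit_det, hdet]; exact isUnit_iff_ne_zero.2 (hl0 i)
  · rw [add_sub_cancel_left]
    apply le_antisymm (rank_vecMulVec_le _ _)
    rw [Nat.one_le_iff_ne_zero, Ne, my_rank_zero]
    intro h
    have := hdet i
    rw [h] at this
    simp at this
    exact hl1 i this.symm
  · intro U hX hA
    set A := (1 + W * Φ) * diagonal d with hAdef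
    have hA' : ∀ v ∈ U, A *ᵥ v ∈ U := fun v hv => hA ⟨v, hv, rfl⟩
    have hApow : ∀ (i : ℕ), ∀ v ∈ U, A ^ i *ᵥ v ∈ U := by
      intro i
      induction i with
      | zero => intro v hv; simpa using hv
      | succ i ih => intro v hv; rw [pow_succ', ← mulVec_mulVec]; exact hA' _ (ih v hv)
    have hX' : ∀ i, ∀ v ∈ U, (ψ i ⬝ᵥ v) • w i ∈ U := by
      intro i v hv
      have h1 : (1 + vecMulVec (w i) (ψ i)) *ᵥ v ∈ U := hX i ⟨v, hv, rfl⟩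
      have h2 := U.sub_mem h1 hv
      rw [add_mulVec, one_mulVec, add_sub_cancel_left, vecMulVec_mulVec] at h2
      simpa using h2
    have hpoly : ∀ v, A *ᵥ (A ^ k *ᵥ v) - c • (A *ᵥ v) - b • (A ^ k *ᵥ v) + (b * c) • v = 0 := by
      intro v
      rw [hAk, add_mulVec, smul_mulVec, one_mulVec, vecMulVec_mulVec, mulVec_add, mulVec_smul,
        mulVec_smul, hAp]
      funext x; simp; ring
    have hB : ∀ i : ℕ, ∀ v x, (diagonal d ^ i *ᵥ v) x = d x ^ i * v x := by
      intro i v x; rw [diagonal_pow, mulVec_diagonal]; simp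
    have hne' : ∀ x, (d x - b) * (d x ^ k - c) ≠ 0 := fun x =>
      mul_ne_zero (sub_ne_zero.2 (hdb x)) (sub_ne_zero.2 (hdk x))
    by_cases hS : ∃ v ∈ U, ∃ i, ψ i ⬝ᵥ v ≠ 0
    · right
      obtain ⟨v, hv, i, hi⟩ := hS
      have hwi : w i ∈ U := by
        have := U.smul_mem (ψ i ⬝ᵥ v)⁻¹ (hX' i v hv)
        rwa [smul_smul, inv_mul_cancel₀ hi, one_smul] at this
      have hw : ∀ j, w j ∈ U := by
        intro j
        by_cases h : j = i
        · rwa [h]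
        · have := U.smul_mem (ψ j ⬝ᵥ w i)⁻¹ (hX' j _ hwi)
          rwa [smul_smul, inv_mul_cancel₀ (hne j i h), one_smul] at this
      have hAB : ∀ v, A *ᵥ v - diagonal d *ᵥ v ∈ U := by
        intro v
        rw [hAdef, add_mul, one_mul, add_mulVec, add_sub_cancel_left, ← mulVec_mulVec, ← hWΦ,
          sum_mulVec]
        apply U.sum_mem
        intro j _
        rw [vecMulVec_mulVec]
        simpa using U.smul_mem _ (hw j)
      have hABi : ∀ i : ℕ, ∀ v, A ^ i *ᵥ v - diagonal d ^ i *ᵥ v ∈ U := by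
        intro i
        induction i with
        | zero => intro v; simp
        | succ i ih =>
          intro v
          have := U.add_mem (hA' _ (ih v)) (hAB (diagonal d ^ i *ᵥ v))
          rwa [mulVec_sub, sub_add_sub_cancel, mulVec_mulVec, mulVec_mulVec, ← pow_succ', ← pow_succ'] at this
      have hall : ∀ v, (diagonal d ^ (k+1) *ᵥ v) - c • (diagonal d *ᵥ v) - b • (diagonal d ^ k *ᵥ v) + (b * c) • v ∈ U := by
        intro v
        have h1 := hABi (k+1) v
        have h2 := U.smul_mem c (hAB v)
        have h3 := U.smul_mem b (hABi k v)
        have h4 := U.neg_mem (U.sub_mem (U.sub_mem h1 h2) h3)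
        have h5 := hpoly v
        rw [mulVec_mulVec, ← pow_succ'] at h5
        convert h4 using 1
        rw [← sub_eq_zero, ← h5]
        simp only [smul_sub]
        abel
      rw [eq_top_iff]
      intro v _
      have := hall (fun x => v x / ((d x - b) * (d x ^ k - c)))
      convert this using 1
      funext x
      have := hne' x
      simp only [Pi.add_apply, Pi.sub_apply, Pi.smul_apply, hB, mulVec_diagonal, smul_eq_mul]
      have e1 : ∀ y z : ℂ, z ≠ 0 → y = z * (y / z) := fun y z hz => by field_simp
      rw [e1 (v x) _ this]
      generalize v x / ((d x - b) * (d x ^ k - c)) = y at *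
      rw [mul_div_cancel_left₀ _ this]
      ring
    · left
      push Not at hS
      have hC : ∀ v ∈ U, (1 + W * Φ) *ᵥ v = v := by
        intro v hv
        rw [← hprod]
        have : ∀ L : List (Matrix J J ℂ), (∀ M ∈ L, M *ᵥ v = v) → L.prod *ᵥ v = v := by
          intro L
          induction L with
          | nil => simp
          | cons M L ih =>
            intro h
            rw [List.prod_cons, ← mulVec_mulVec, ih (fun M hM => h M (List.mem_cons_of_mem _ hM)),
              h M List.mem_cons_self]
        apply this
        intro M hM
        obtain ⟨i, rfl⟩ := List.mem_ofFn.1 hM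
        rw [add_mulVec, one_mulVec, vecMulVec_mulVec, hS v hv i]
        simp
      have hAB : ∀ v ∈ U, A *ᵥ v = diagonal d *ᵥ v := by
        intro v hv
        have h1 := hC _ (hA' v hv)
        have h2 : (1 + W * Φ) *ᵥ (diagonal d *ᵥ v) = A *ᵥ v := by rw [mulVec_mulVec]
        have hinj := Matrix.mulVec_injective_of_isUnit
          ((Matrix.isUnit_iff_isUnit_det _).2 (isUnit_iff_ne_zero.2 hCdet))
        exact hinj (h1.trans h2.symm)
      have hABi : ∀ i : ℕ, ∀ v ∈ U, A ^ i *ᵥ v = diagonal d ^ i *ᵥ v := by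
        intro i
        induction i with
        | zero => intro v _; simp
        | succ i ih =>
          intro v hv
          rw [pow_succ', ← mulVec_mulVec, hAB _ (hApow i v hv), ih v hv, mulVec_mulVec, ← pow_succ']
      rw [eq_bot_iff]
      intro v hv
      rw [Submodule.mem_bot]
      have h5 := hpoly v
      rw [mulVec_mulVec, ← pow_succ', hABi _ v hv, hABi k v hv, hAB v hv] at h5
      funext x
      have h6 := congrFun h5 x
      simp only [Pi.add_apply, Pi.sub_apply, Pi.smul_apply, hB, mulVec_diagonal, smul_eq_mul, Pi.zero_apply] at h6
      have : ((d x - b) * (d x ^ k - c)) * v x = 0 := by linear_combination h6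
      simpa [hne' x] using this

/-- main construction theorem for turbines with shaft T*_{n,k,ℓ}:
realization of the numerical local data (ε; b; λ₁,…,λ_ℓ; ξ₁,…,ξ_{k+1}; ℓ,…,ℓ,1)
by pseudo-reflections X₁,…,X_ℓ and a matrix Ω₀ acting irreducibly on ℂ^{kℓ+1}. -/
theorem stmt_14 {k ℓ : ℕ} (hk : 1 ≤ k) (hℓ : 1 ≤ ℓ) (ε : ℂ) (hε : ε ≠ 0) (r : ℤ)
    (b : ℂ) (lam : Fin ℓ → ℂ) (ξ : Fin (k + 1) → ℂ) (η₁ η₂ : ℂ)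
    (hη₁ : η₁ = (-1 : ℂ) ^ (k - 1) * ε ^ r * (∏ j : Fin k, ξ j.castSucc)⁻¹)
    (hη₂ : η₂ = (-1 : ℂ) ^ k * ε ^ r * b * (∏ j, ξ j)⁻¹)
    (hb : b ≠ 0) (hlam0 : ∀ i, lam i ≠ 0)
    (hlam1 : ∀ i, lam i ≠ 1) (hlamη : ∀ i, lam i ≠ η₁)
    (hη₁1 : η₁ ≠ 1) (hη₂1 : η₂ ≠ 1) (hηη : η₁ ≠ η₂)
    (hξ0 : ∀ j, ξ j ≠ 0) (hξinj : Function.Injective ξ)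
    (hξb : ∀ j, ξ j ≠ b)
    (hbk : b ^ k ≠ ε ^ r) (hξk : ∀ j, ξ j ^ k ≠ ε ^ r)
    (hξsum : ∑ j : Fin k, ξ j.castSucc ≠ 0)
    (hfuchs : (∏ i, lam i) * (∏ j : Fin k, ξ j.castSucc ^ ℓ) * ξ (Fin.last k) =
      (-1 : ℂ) ^ ((k - 1) * ℓ) * b * (ε ^ r) ^ ℓ) :
    ∃ (X : Fin ℓ → Matrix (Fin (k * ℓ + 1)) (Fin (k * ℓ + 1)) ℂ)
      (Ω : Matrix (Fin (k * ℓ + 1)) (Fin (k * ℓ + 1)) ℂ),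
      IsUnit Ω ∧
      (∀ i, IsUnit (X i) ∧ (X i - 1).rank = 1 ∧ (X i).det = lam i) ∧
      ((((ε ^ r) • (Ω ^ k)⁻¹ : Matrix (Fin (k * ℓ + 1)) (Fin (k * ℓ + 1)) ℂ) - 1).rank = 1 ∧
        ((ε ^ r) • (Ω ^ k)⁻¹ : Matrix (Fin (k * ℓ + 1)) (Fin (k * ℓ + 1)) ℂ).det =
          ε ^ r * (b ^ k)⁻¹) ∧
      (∃ (P : Matrix (Fin (k * ℓ + 1)) (Fin (k * ℓ + 1)) ℂ) (d : Fin (k * ℓ + 1) → ℂ),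
        IsUnit P ∧
        ((List.ofFn X).prod)⁻¹ * Ω = P * Matrix.diagonal d * P⁻¹ ∧
        ∀ j : Fin (k + 1),
          ({p | d p = ξ j}).ncard = if (j : ℕ) < k then ℓ else 1) ∧
      (∀ U : Submodule ℂ (Fin (k * ℓ + 1) → ℂ),
        (∀ i, U.map (X i).mulVecLin ≤ U) → U.map Ω.mulVecLin ≤ U →
          U = ⊥ ∨ U = ⊤) := by
  obtain ⟨n, rfl⟩ : ∃ n, ℓ = n + 1 := ⟨ℓ - 1, by omega⟩
  have hc : ε ^ r ≠ 0 := zpow_ne_zero r hε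
  set c := ε ^ r with hcdef
  clear_value c
  have hprod0 : (∏ j : Fin k, ξ j.castSucc) ≠ 0 := Finset.prod_ne_zero_iff.2 fun j _ => hξ0 _
  have hη0 : η₁ ≠ 0 := by
    rw [hη₁]; exact mul_ne_zero (mul_ne_zero (by simp) hc) (inv_ne_zero hprod0)
  obtain ⟨W₀, Φ₀, p₀, q₀, hΦW₀, hAk₀, hAp₀⟩ := data_lem (n := n) hk c b ξ η₁ hη₁ hξinj hξ0
  obtain ⟨u, hu, hus⟩ := u_lem η₁ hη0 (n+1) lam
  have hlp : ∏ i, (lam i / η₁) = b / ξ (Fin.last k) := by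
    rw [Finset.prod_div_distrib, Finset.prod_const, Finset.card_univ, Fintype.card_fin,
      div_eq_div_iff (pow_ne_zero _ hη0) (hξ0 _), hη₁]
    rw [Finset.prod_pow] at hfuchs
    rw [pow_mul] at hfuchs
    have h2 := pow_ne_zero (n+1) hprod0
    rw [mul_pow, mul_pow, inv_pow]
    field_simp
    linear_combination hfuchs
  have hs : ∑ i, u i = η₁ * b / ξ (Fin.last k) - η₁ := by
    rw [hlp] at hus; linear_combination hus
  have hs0 : η₁ * b / ξ (Fin.last k) - η₁ ≠ 0 := by
    intro h
    have h1 := hξ0 (Fin.last k)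
    have : η₁ * (b - ξ (Fin.last k)) = 0 := by
      field_simp at h
      linear_combination h
    rcases mul_eq_zero.1 this with h | h
    · exact hη0 h
    · exact hξb _ (sub_eq_zero.1 h).symm
  obtain ⟨Q, hQ, hQD⟩ := Q_lem η₁ _ u hs hs0
  have hcard : Fintype.card (Fin (k+1) ⊕ (Fin k × Fin n)) = k * (n+1) + 1 := by
    simp; ring
  let e : (Fin (k+1) ⊕ (Fin k × Fin n)) ≃ Fin (k * (n+1) + 1) := Fintype.equivFinOfCardEq hcard
  let d₀ : Fin (k+1) ⊕ (Fin k × Fin n) → ℂ := Sum.elim ξ (fun x => ξ x.1.castSucc)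
  let d : Fin (k * (n+1) + 1) → ℂ := d₀ ∘ e.symm
  let W := (W₀ * Q⁻¹).submatrix e.symm id
  let Φ := (Q * Φ₀).submatrix id e.symm
  have hWΦ : W * Φ = (W₀ * Φ₀).submatrix e.symm e.symm := by
    simp only [W, Φ]
    rw [← Matrix.submatrix_mul _ _ _ _ _ Function.bijective_id, Matrix.mul_assoc, ← Matrix.mul_assoc Q⁻¹,
      nonsing_inv_mul _ hQ, Matrix.one_mul]
  have hΦW : Φ * W = (η₁ - 1) • 1 + vecMulVec u (fun _ => 1) := by
    simp only [W, Φ]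
    rw [← Matrix.submatrix_mul _ _ _ _ _ e.symm.bijective, Matrix.mul_assoc, ← Matrix.mul_assoc Φ₀, hΦW₀,
      ← Matrix.mul_assoc]
    have : (η₁ * b / ξ (Fin.last k) - 1) = η₁ + (η₁ * b / ξ (Fin.last k) - η₁) - 1 := by ring
    rw [this, hQD, Matrix.mul_assoc, mul_nonsing_inv _ hQ, Matrix.mul_one]
    rfl
  have hA : (1 + W * Φ) * diagonal d =
      reindexAlgEquiv ℂ ℂ e ((1 + W₀ * Φ₀) * diagonal d₀) := by
    rw [map_mul, map_add, map_one, hWΦ]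
    simp [coe_reindexAlgEquiv, reindex_apply, d]
  have hd0 : ∀ x, ∃ j, d x = ξ j := by
    intro x
    simp only [d, Function.comp, d₀]
    rcases e.symm x with j | y
    · exact ⟨j, rfl⟩
    · exact ⟨y.1.castSucc, rfl⟩
  have hAk : ((1 + W * Φ) * diagonal d) ^ k = c • 1 + vecMulVec (p₀ ∘ e.symm) (q₀ ∘ e.symm) := by
    rw [hA, ← map_pow, hAk₀, map_add, map_smul, map_one]
    rfl
  have hAp : ((1 + W * Φ) * diagonal d) *ᵥ (p₀ ∘ e.symm) = b • (p₀ ∘ e.symm) := by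
    rw [hA, coe_reindexAlgEquiv, reindex_apply, submatrix_mulVec_equiv]
    have : (p₀ ∘ e.symm) ∘ e.symm.symm = p₀ := by funext x; simp
    rw [this, hAp₀]
    rfl
  obtain ⟨X, hX, hXp, hXi⟩ := core_lem W Φ d
    (fun x => by obtain ⟨j, hj⟩ := hd0 x; rw [hj]; exact hξ0 j) η₁ b c hη0 lam hlam0 hlam1 hlamη
    u hu hΦW _ _ hAk hAp (fun x => by obtain ⟨j, hj⟩ := hd0 x; rw [hj]; exact hξk j)
    (fun x => by obtain ⟨j, hj⟩ := hd0 x; rw [hj]; exact hξb j)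
  have hCdet : (1 + W * Φ).det = ∏ i, lam i := by
    rw [← hXp, ← Matrix.coe_detMonoidHom, map_list_prod, List.map_ofFn, List.prod_ofFn]
    exact Finset.prod_congr rfl fun i _ => (hX i).2.2
  have hCu : IsUnit (1 + W * Φ).det := by
    rw [hCdet]; exact isUnit_iff_ne_zero.2 (Finset.prod_ne_zero_iff.2 fun i _ => hlam0 i)
  have hdp : ∏ x, d x = (∏ j : Fin k, ξ j.castSucc ^ (n+1)) * ξ (Fin.last k) := by
    have : ∏ x, d x = ∏ y, d₀ y := Equiv.prod_comp e.symm d₀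
    rw [this, Fintype.prod_sum_type, Fintype.prod_prod_type]
    simp only [d₀, Sum.elim_inl, Sum.elim_inr, Finset.prod_const, Finset.card_univ, Fintype.card_fin]
    rw [Fin.prod_univ_castSucc, Finset.prod_pow, Finset.prod_pow, pow_succ]
    ring
  have hdetA : ((1 + W * Φ) * diagonal d).det = (-1 : ℂ) ^ ((k - 1) * (n+1)) * b * c ^ (n+1) := by
    rw [det_mul, det_diagonal, hCdet, hdp, ← hfuchs]; ring
  have hdetA0 : ((1 + W * Φ) * diagonal d).det ≠ 0 := by
    rw [hdetA]; exact mul_ne_zero (mul_ne_zero (by simp) hb) (pow_ne_zero _ hc)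
  have hdetAk : (((1 + W * Φ) * diagonal d) ^ k).det = b ^ k * c ^ (k * (n+1)) := by
    rw [det_pow, hdetA, mul_pow, mul_pow, ← pow_mul, ← pow_mul, Even.neg_one_pow]
    · ring
    · have : (k - 1) * (n + 1) * k = ((k - 1) * (k - 1 + 1)) * (n+1) := by
        rw [Nat.sub_add_cancel hk]; ring
      rw [this]; exact (Nat.even_mul_succ_self (k-1)).mul_right _
  have hAku : IsUnit (((1 + W * Φ) * diagonal d) ^ k).det := by
    rw [hdetAk]; exact isUnit_iff_ne_zero.2 (mul_ne_zero (pow_ne_zero _ hb) (pow_ne_zero _ hc))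
  have hdetinv : (c • (((1 + W * Φ) * diagonal d) ^ k)⁻¹).det = c * (b ^ k)⁻¹ := by
    rw [det_smul, det_nonsing_inv, hdetAk, Ring.inverse_eq_inv', Fintype.card_fin, pow_succ]
    have := pow_ne_zero (k * (n+1)) hc
    field_simp
  refine ⟨X, (1 + W * Φ) * diagonal d, ?_, hX, ⟨?_, hdetinv⟩, ⟨1, d, isUnit_one, ?_, ?_⟩, hXi⟩
  · rw [Matrix.isUnit_iff_isUnit_det]; exact isUnit_iff_ne_zero.2 hdetA0
  · apply le_antisymm
    · have : c • (((1 + W * Φ) * diagonal d) ^ k)⁻¹ - 1 =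
          (((1 + W * Φ) * diagonal d) ^ k)⁻¹ * (-vecMulVec (p₀ ∘ e.symm) (q₀ ∘ e.symm)) := by
        have h1 : -vecMulVec (p₀ ∘ e.symm) (q₀ ∘ e.symm) = c • 1 - ((1 + W * Φ) * diagonal d) ^ k := by
          rw [hAk]; abel
        rw [h1, mul_sub, nonsing_inv_mul _ hAku, mul_smul_comm, mul_one]
      rw [this, ← neg_vecMulVec]
      exact (rank_mul_le_right _ _).trans (rank_vecMulVec_le _ _)
    · rw [Nat.one_le_iff_ne_zero, Ne, my_rank_zero]
      intro h
      rw [sub_eq_zero.1 h, det_one] at hdetinv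
      have hb' := pow_ne_zero k hb
      field_simp at hdetinv
      exact hbk hdetinv
  · rw [hXp, ← Matrix.mul_assoc, nonsing_inv_mul _ hCu]; simp
  · intro j
    have h1 : {x | d x = ξ j} = e '' {y | d₀ y = ξ j} := by
      ext x
      simp only [d, Function.comp, Set.mem_ofPred_eq, Set.mem_image]
      constructor
      · intro h; exact ⟨e.symm x, h, by simp⟩
      · rintro ⟨y, hy, rfl⟩; simpa using hy
    rw [h1, Set.ncard_image_of_injective _ e.injective]
    refine Fin.lastCases ?_ (fun i => ?_) j
    · have : {y | d₀ y = ξ (Fin.last k)} = {Sum.inl (Fin.last k)} := by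
        ext y
        rcases y with y | y
        · simp [d₀, hξinj.eq_iff]
        · simp [d₀, hξinj.eq_iff, Fin.castSucc_ne_last]
      rw [this]; simp
    · have : {y | d₀ y = ξ i.castSucc} =
          insert (Sum.inl i.castSucc) ((fun t : Fin n => Sum.inr (i, t)) '' Set.univ) := by
        ext y
        rcases y with y | ⟨y, t⟩
        · simp [d₀, hξinj.eq_iff]
        · simp [d₀, hξinj.eq_iff, eq_comm]
      rw [this, Set.ncard_insert_of_notMem (by simp), Set.ncard_image_of_injective, Set.ncard_univ]
      · simp
      · intro a a' h; simpa using h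
end

section
/- Let k ≥ 1 and ℓ ≥ 2 be integers, m = kℓ, let ε be a nonzero complex number, let r be an integer, and let λ₁, …, λ_ℓ, ξ₁, …, ξ_{k+1} be nonzero complex numbers. Set η₁ = (−1)^{k−1}·ε^r·(ξ₁⋯ξ_k)^{−1} and η₂ = (−1)^{k−1}·ε^r·ξ_{k+1}^{−1}·(ξ₁⋯ξ_{k−1})^{−1}. Assume: λ_i ≠ 1 and λ_i ≠ η₁ for all i; η₁ ≠ 1; η₂ ≠ 1; the ξ_j are pairwise distinct; ξ₁ + ⋯ + ξ_k ≠ 0; ξ₁ + ⋯ + ξ_{k−1} + ξ_{k+1} ≠ 0; ξ_j^k ≠ ε^r for all j; and the Fuchs relation λ₁⋯λ_ℓ·ξ₁^ℓ⋯ξ_{k−1}^ℓ·ξ_k^{ℓ−1}·ξ_{k+1} = (−1)^{(k−1)ℓ}·ε^{rℓ}. Then there exist pseudo-reflections X₁, …, X_ℓ ∈ GL_m(ℂ) with special eigenvalues λ₁, …, λ_ℓ respectively, and a matrix Ω₀ ∈ GL_m(ℂ) with Ω₀^k = ε^r·I_m, such that: (1) each of the k distinct k-th roots of ε^r is an eigenvalue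 of Ω₀ of multiplicity ℓ; (2) Ω∞ := (X₁⋯X_ℓ)^{−1}·Ω₀ is diagonalizable, with eigenvalues ξ₁, …, ξ_{k−1} each of multiplicity ℓ, ξ_k of multiplicity ℓ − 1, and ξ_{k+1} of multiplicity 1; (3) the family {X₁, …, X_ℓ, Ω₀} acts irreducibly on ℂ^m. -/
section
open Matrix

lemma det_vmv {ι : Type*} [Fintype ι] [DecidableEq ι] (u v : ι → ℂ) :
    ((1 : Matrix ι ι ℂ) + vecMulVec u v).det = 1 + v ⬝ᵥ u := by
  rw [vecMulVec_eq Unit, det_one_add_replicateCol_mul_replicateRow]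

lemma prod_aux {ι : Type*} [Fintype ι] [DecidableEq ι] : ∀ {ℓ : ℕ} (u φ ψ : Fin ℓ → ι → ℂ)
    (_ : ∀ i, ψ i = φ i + ∑ j, if i < j then (φ i ⬝ᵥ u j) • ψ j else 0),
    (List.ofFn fun i => (1 : Matrix ι ι ℂ) + vecMulVec (u i) (φ i)).prod
      = 1 + ∑ i, vecMulVec (u i) (ψ i)
  | 0, u, φ, ψ, _ => by simp
  | n + 1, u, φ, ψ, h => by
    have ih := prod_aux (fun i => u i.succ) (fun i => φ i.succ) (fun i => ψ i.succ) (by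
      intro i
      have := h i.succ
      rw [Fin.sum_univ_succ] at this
      simpa using this)
    have h0 := h 0
    rw [Fin.sum_univ_succ] at h0
    simp at h0
    rw [List.ofFn_succ, List.prod_cons, ih, Fin.sum_univ_succ, h0]
    simp only [add_mul, mul_add, one_mul, mul_one, Finset.mul_sum, vecMulVec_mul_vecMulVec,
      vecMulVec_add]
    have : vecMulVec (u 0) (∑ x : Fin n, (φ 0 ⬝ᵥ u x.succ) • ψ x.succ)
      = ∑ x : Fin n, vecMulVec (u 0) ((φ 0 ⬝ᵥ u x.succ) • ψ x.succ) := by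
      ext a b
      simp only [vecMulVec_apply, Matrix.sum_apply, Finset.mul_sum, Finset.sum_apply]
    rw [this, Finset.sum_add_distrib]
    abel

lemma conj_aux {ℓ : ℕ} (n : Fin ℓ) (a b : Fin ℓ → ℂ) (β : ℂ) (hβ : b ⬝ᵥ a = β) (hβ0 : β ≠ 0)
    (hb : b n ≠ 0) : ∃ R S : Matrix (Fin ℓ) (Fin ℓ) ℂ, R * S = 1 ∧
      R * vecMulVec a b = diagonal (fun i => if i = n then β else 0) * R := by
  let R : Matrix (Fin ℓ) (Fin ℓ) ℂ := of fun i => if i = n then β⁻¹ • b else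
    Pi.single i 1 - (a i * β⁻¹) • b
  let S : Matrix (Fin ℓ) (Fin ℓ) ℂ := (of fun j => if j = n then a else
    Pi.single j 1 - (b j / b n) • Pi.single n 1)ᵀ
  refine ⟨R, S, ?_, ?_⟩
  · ext i j
    have : (R * S) i j = (if i = n then β⁻¹ • b else
      Pi.single i 1 - (a i * β⁻¹) • b) ⬝ᵥ (if j = n then a else
      Pi.single j 1 - (b j / b n) • Pi.single n 1) := rfl
    rw [this]
    by_cases hi : i = n <;> by_cases hj : j = n
    · simp [hi, hj, hβ, hβ0, one_apply]
    · have := Ne.symm hj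
      simp [hi, hj, one_apply, this]
      field_simp; simp
    · simp [hi, hj, hβ, hβ0, sub_dotProduct]
    · simp [hi, hj, one_apply, Pi.single_apply, eq_comm]
      field_simp; ring
  · ext i j
    rw [diagonal_mul, mul_vecMulVec, vecMulVec_apply]
    have : (R *ᵥ a) i = (if i = n then β⁻¹ • b else
      Pi.single i 1 - (a i * β⁻¹) • b) ⬝ᵥ a := rfl
    rw [this]
    by_cases hi : i = n
    · simp [hi, hβ, hβ0, R]
    · simp [hi, hβ, hβ0, R, sub_dotProduct]

lemma core {ι : Type*} [Fintype ι] [DecidableEq ι] {ℓ : ℕ} (n : Fin ℓ) (lam : Fin ℓ → ℂ)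
    (η₁ η₂ : ℂ) (h0 : η₁ ≠ 0) (hne : η₂ ≠ η₁) (hprod : ∏ i, lam i = η₁ ^ (ℓ - 1) * η₂)
    (hlam : ∀ i, lam i ≠ η₁) (E : Matrix ι (Fin ℓ) ℂ) (F : Matrix (Fin ℓ) ι ℂ)
    (hFE : F * E = diagonal (fun i => if i = n then η₂ - 1 else η₁ - 1)) :
    ∃ u φ : Fin ℓ → ι → ℂ, (∀ i j, i ≠ j → φ i ⬝ᵥ u j ≠ 0) ∧
      (∀ i, φ i ⬝ᵥ u i = lam i - 1) ∧
      (List.ofFn fun i => (1 : Matrix ι ι ℂ) + vecMulVec (u i) (φ i)).prod = 1 + E * F := by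
  let T : Matrix (Fin ℓ) (Fin ℓ) ℂ := of fun i j => if i < j then (lam j - η₁) / η₁ else 0
  let L : Matrix (Fin ℓ) (Fin ℓ) ℂ := of fun i j =>
    if i < j then 0 else if i = j then lam j - 1 else lam j - η₁
  let b : Fin ℓ → ℂ := fun j => lam j - η₁
  have hTL : 1 + L = η₁ • (1 - T) + vecMulVec 1 b := by
    ext i j
    rcases lt_trichotomy i j with h | h | h
    · simp [L, T, h, h.ne, b, vecMulVec_apply]; field_simp; ring
    · simp [L, T, h, b, vecMulVec_apply]
    · simp [L, T, h.not_gt, h.ne', b, vecMulVec_apply]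
  have hdetT : (1 - T).det = 1 := by
    rw [det_of_isUpperTriangular]
    · simp [T]
    · intro i j hij
      have : j < i := hij
      simp [T, this.not_gt, this.ne']
  have hdetL : (1 + L).det = ∏ i, lam i := by
    rw [det_of_isLowerTriangular]
    · simp [L]
    · intro i j hij
      have : i < j := hij
      simp [L, this, this.ne]
  have hu : IsUnit (1 - T).det := by rw [hdetT]; exact isUnit_one
  let a := (1 - T)⁻¹ *ᵥ (1 : Fin ℓ → ℂ)
  have ha : (1 - T) *ᵥ a = 1 := by
    simp [a, mulVec_mulVec, mul_nonsing_inv _ hu]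
  have hQ : (1 - T) * (η₁ • (1 : Matrix (Fin ℓ) (Fin ℓ) ℂ) + vecMulVec a b) = 1 + L := by
    rw [hTL, mul_add, mul_vecMulVec, ha]; simp
  have hβ : b ⬝ᵥ a = η₂ - η₁ := by
    have h1 : (η₁ • (1 : Matrix (Fin ℓ) (Fin ℓ) ℂ) + vecMulVec a b).det = η₁ ^ (ℓ - 1) * η₂ := by
      rw [← hprod, ← hdetL, ← hQ, det_mul, hdetT, one_mul]
    have h2 : η₁ • (1 : Matrix (Fin ℓ) (Fin ℓ) ℂ) + vecMulVec a b
       = η₁ • (1 + vecMulVec (η₁⁻¹ • a) b) := by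
      rw [smul_add, ← smul_vecMulVec, smul_smul, mul_inv_cancel₀ h0, one_smul]
    rw [h2, det_smul, det_vmv, Fintype.card_fin] at h1
    have hl : ℓ = (ℓ - 1) + 1 := by have := n.2; omega
    rw [show η₁ ^ ℓ = η₁ ^ (ℓ - 1) * η₁ by rw [← pow_succ, ← hl], mul_assoc] at h1
    have := mul_left_cancel₀ (pow_ne_zero _ h0) h1
    rw [dotProduct_smul, smul_eq_mul, mul_add, ← mul_assoc, mul_inv_cancel₀ h0] at this
    linear_combination this
  obtain ⟨R, S, hRS, hR⟩ := conj_aux n a b _ hβ (sub_ne_zero.2 hne) (sub_ne_zero.2 (hlam n))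
  have hSR : S * R = 1 := mul_eq_one_comm.1 hRS
  let Ut := E * R
  let Ψ := S * F
  let Φ := (1 - T) * Ψ
  have hΨU : Ψ * Ut = η₁ • (1 : Matrix (Fin ℓ) (Fin ℓ) ℂ) + vecMulVec a b - 1 := by
    have h3 : F * E = diagonal (fun i => if i = n then η₂ - η₁ else 0) + (η₁ - 1) • 1 := by
      rw [hFE]
      ext i j
      by_cases hij : i = j
      · subst hij
        by_cases hi : i = n <;> simp [hi]
      · simp [hij]
    calc Ψ * Ut = S * (F * E) * R := by simp only [Ψ, Ut, Matrix.mul_assoc]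
      _ = S * (diagonal (fun i => if i = n then η₂ - η₁ else 0) * R) + (η₁ - 1) • (S * R) := by
          rw [h3]; simp [mul_add, add_mul, Matrix.mul_assoc]
      _ = _ := by
          rw [← hR, ← Matrix.mul_assoc, hSR, one_mul, sub_smul, one_smul]; abel
  have hG : Φ * Ut = L + T := by
    calc Φ * Ut = (1 - T) * (Ψ * Ut) := by simp only [Φ, Matrix.mul_assoc]
      _ = _ := by rw [hΨU, mul_sub, hQ, mul_one]; abel
  have hGe : ∀ i j, (fun p => Φ i p) ⬝ᵥ (fun p => Ut p j) = L i j + T i j := fun i j => by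
    rw [← Matrix.add_apply, ← hG]; rfl
  refine ⟨fun j p => Ut p j, fun i p => Φ i p, ?_, ?_, ?_⟩
  · intro i j hij
    rw [hGe]
    have hn := sub_ne_zero.2 (hlam j)
    rcases lt_or_gt_of_ne hij with h | h
    · simp [L, T, h, hn, h0]
    · simp [L, T, h.not_gt, h.ne', hn]
  · intro i
    rw [hGe]; simp [L, T]
  · rw [prod_aux _ _ (fun i p => Ψ i p)]
    · congr 1
      have : E * F = Ut * Ψ := by
        simp only [Ut, Ψ]
        rw [Matrix.mul_assoc, ← Matrix.mul_assoc R, hRS, Matrix.one_mul]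
      rw [this]
      ext p q
      simp [Matrix.sum_apply, vecMulVec_apply, Matrix.mul_apply]
    · intro i
      have : ∀ j, (if i < j then ((fun p => Φ i p) ⬝ᵥ fun p => Ut p j) • (fun p => Ψ j p) else 0)
        = T i j • (fun p => Ψ j p) := by
        intro j
        rw [hGe]
        by_cases h : i < j <;> simp [h, T, L]
      rw [Finset.sum_congr rfl fun j _ => this j]
      have h5 : Ψ = Φ + T * Ψ := by simp only [Φ]; rw [Matrix.sub_mul, Matrix.one_mul]; abel
      ext p
      have := congrFun (congrFun h5 i) p
      simpa [Matrix.mul_apply] using this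

lemma irred {ι : Type*} [Fintype ι] [DecidableEq ι] {ℓ k : ℕ} (u φ : Fin ℓ → ι → ℂ)
    (hoff : ∀ i j, i ≠ j → φ i ⬝ᵥ u j ≠ 0) (c : ℂ) (A B : Matrix ι ι ℂ)
    (hA : A ^ k = c • (1 : Matrix ι ι ℂ)) (hB : IsUnit (B ^ k - c • (1 : Matrix ι ι ℂ)))
    (Y : Matrix ι ι ℂ)
    (hY : Y = (List.ofFn fun i => (1 : Matrix ι ι ℂ) + vecMulVec (u i) (φ i)).prod)
    (hYu : IsUnit Y) (hAB : A = Y * B)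
    (U : Submodule ℂ (ι → ℂ))
    (hX : ∀ i, U.map ((1 : Matrix ι ι ℂ) + vecMulVec (u i) (φ i)).mulVecLin ≤ U)
    (hU : U.map A.mulVecLin ≤ U) : U = ⊥ ∨ U = ⊤ := by
  have hX' : ∀ i, ∀ v ∈ U, (φ i ⬝ᵥ v) • u i ∈ U := by
    intro i v hv
    have := hX i (Submodule.mem_map_of_mem hv)
    rw [mulVecLin_apply, add_mulVec, one_mulVec] at this
    have := (U.add_mem_iff_right hv).1 this
    rw [vecMulVec_mulVec] at this
    simpa using this
  have hU' : ∀ v ∈ U, A *ᵥ v ∈ U := fun v hv => hU (Submodule.mem_map_of_mem hv)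
  by_cases h : ∀ i, ∀ v ∈ U, φ i ⬝ᵥ v = 0
  · left
    have hYv : ∀ v ∈ U, Y *ᵥ v = v := by
      intro v hv
      rw [hY]
      have : ∀ l : List (Matrix ι ι ℂ), (∀ X ∈ l, X *ᵥ v = v) → l.prod *ᵥ v = v := by
        intro l
        induction l with
        | nil => simp
        | cons X l ih =>
          intro h
          rw [List.prod_cons, ← mulVec_mulVec, ih fun Z hZ => h Z (by simp [hZ]), h X (by simp)]
      apply this
      intro X hX
      obtain ⟨i, rfl⟩ := (List.mem_ofFn' _ _).1 hX
      simp [add_mulVec, vecMulVec_mulVec, h i v hv]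
    have hBv : ∀ v ∈ U, B *ᵥ v = A *ᵥ v := by
      intro v hv
      apply (mulVec_injective_iff_isUnit).2 hYu
      rw [hYv _ (hU' v hv), mulVec_mulVec, ← hAB]
    have hpow : ∀ s : ℕ, ∀ v ∈ U, (B ^ s) *ᵥ v = (A ^ s) *ᵥ v := by
      intro s
      induction s with
      | zero => simp
      | succ s ih =>
        intro v hv
        rw [pow_succ, pow_succ, ← mulVec_mulVec, ← mulVec_mulVec, hBv v hv, ih _ (hU' v hv)]
    rw [eq_bot_iff]
    intro v hv
    have : (B ^ k - c • (1 : Matrix ι ι ℂ)) *ᵥ v = (B ^ k - c • (1 : Matrix ι ι ℂ)) *ᵥ 0 := by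
      rw [sub_mulVec, hpow k v hv, hA]; simp
    exact (mulVec_injective_iff_isUnit).2 hB this
  · right
    push Not at h
    obtain ⟨i, v, hv, hiv⟩ := h
    have hui : u i ∈ U := (U.smul_mem_iff hiv).1 (hX' i v hv)
    have hu : ∀ j, u j ∈ U := by
      intro j
      by_cases hj : j = i
      · rwa [hj]
      · exact (U.smul_mem_iff (hoff j i hj)).1 (hX' j _ hui)
    have hYv : ∀ v, Y *ᵥ v - v ∈ U := by
      intro v
      rw [hY]
      have : ∀ l : List (Matrix ι ι ℂ), (∀ X ∈ l, ∀ w, X *ᵥ w - w ∈ U) → l.prod *ᵥ v - v ∈ U := by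
        intro l
        induction l with
        | nil => simp
        | cons X l ih =>
          intro h
          rw [List.prod_cons, ← mulVec_mulVec]
          have h1 := ih fun Z hZ => h Z (by simp [hZ])
          have h2 := h X (by simp) (l.prod *ᵥ v)
          simpa using U.add_mem h2 h1
      apply this
      intro X hX w
      obtain ⟨i, rfl⟩ := (List.mem_ofFn' _ _).1 hX
      have := U.smul_mem (φ i ⬝ᵥ w) (hu i)
      simpa [add_mulVec, vecMulVec_mulVec] using this
    have hABv : ∀ v, A *ᵥ v - B *ᵥ v ∈ U := by
      intro v
      rw [hAB, ← mulVec_mulVec]; exact hYv _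
    have hpow : ∀ s : ℕ, ∀ v, (A ^ s) *ᵥ v - (B ^ s) *ᵥ v ∈ U := by
      intro s
      induction s with
      | zero => simp
      | succ s ih =>
        intro v
        rw [pow_succ', pow_succ', ← mulVec_mulVec, ← mulVec_mulVec]
        have h1 := hU' _ (ih v)
        have h2 := hABv (B ^ s *ᵥ v)
        rw [mulVec_sub] at h1
        simpa using U.add_mem h1 h2
    rw [eq_top_iff]
    intro w _
    obtain ⟨v, rfl⟩ := (mulVec_surjective_iff_isUnit).2 hB w
    have := U.neg_mem (hpow k v)
    rw [hA] at this
    simpa [sub_mulVec] using this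
lemma vand_unit {k : ℕ} (d : Fin k → ℂ) (hd : Function.Injective d) :
    IsUnit (vandermonde d)ᵀ.det := by
  rw [det_transpose]
  exact (det_vandermonde_ne_zero_iff.2 hd).isUnit

lemma comp_row {k : ℕ} (d : Fin k → ℂ) (hd : Function.Injective d) (a a' : Fin k)
    (h : (a' : ℕ) = a + 1) :
    ((vandermonde d)ᵀ * diagonal d * ((vandermonde d)ᵀ)⁻¹) a = (1 : Matrix (Fin k) (Fin k) ℂ) a' := by
  rw [← mul_nonsing_inv _ (vand_unit d hd)]
  ext b
  rw [mul_apply, mul_apply]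
  refine Finset.sum_congr rfl fun c _ => ?_
  rw [mul_diagonal, transpose_apply, transpose_apply, vandermonde_apply, vandermonde_apply, h,
    pow_succ]

lemma comp_det {k : ℕ} (d : Fin k → ℂ) (hd : Function.Injective d) :
    ((vandermonde d)ᵀ * diagonal d * ((vandermonde d)ᵀ)⁻¹).det = ∏ a, d a := by
  rw [det_conj ((isUnit_iff_isUnit_det _).2 (vand_unit d hd)), det_diagonal]

lemma one_block {k : ℕ} (n : Fin k) (hn : (n : ℕ) + 1 = k) (z d : Fin k → ℂ)
    (hz : Function.Injective z) (hd : Function.Injective d) (hd0 : ∀ a, d a ≠ 0) :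
    ∃ σ : Fin k → ℂ, (vandermonde z)ᵀ * diagonal z * ((vandermonde z)ᵀ)⁻¹ =
      (1 + vecMulVec (Pi.single n 1) σ) * ((vandermonde d)ᵀ * diagonal d * ((vandermonde d)ᵀ)⁻¹) ∧
      σ n = (∏ a, z a) * (∏ a, d a)⁻¹ - 1 := by
  have hcz := comp_row z hz
  have hcd := comp_row d hd
  have hdz := comp_det z hz
  have hdd := comp_det d hd
  generalize (vandermonde z)ᵀ * diagonal z * ((vandermonde z)ᵀ)⁻¹ = A at *
  generalize (vandermonde d)ᵀ * diagonal d * ((vandermonde d)ᵀ)⁻¹ = B at *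
  have hp : ∏ a, d a ≠ 0 := Finset.prod_ne_zero_iff.2 fun a _ => hd0 a
  have hBu : IsUnit B.det := by rw [hdd]; exact hp.isUnit
  have hAB : A - B = vecMulVec (Pi.single n 1) (A n - B n) := by
    ext a b
    by_cases h : a = n
    · subst h; simp [vecMulVec_apply]
    · have : (a : ℕ) + 1 < k := by
        have := a.2
        have : (a : ℕ) ≠ n := fun h' => h (Fin.ext h')
        omega
      rw [Matrix.sub_apply, hcz a ⟨a + 1, this⟩ rfl, hcd a ⟨a + 1, this⟩ rfl]
      simp [vecMulVec_apply, h]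
  have key : A = (1 + vecMulVec (Pi.single n 1) ((A n - B n) ᵥ* B⁻¹)) * B := by
    rw [add_mul, one_mul, vecMulVec_mul, vecMul_vecMul, nonsing_inv_mul _ hBu, vecMul_one, ← hAB]
    abel
  refine ⟨_, key, ?_⟩
  have := congrArg det key
  rw [det_mul, det_vmv, hdz, hdd, dotProduct_single, mul_one] at this
  rw [this, mul_assoc, mul_inv_cancel₀ hp]; ring

lemma blocks {k ℓ : ℕ} (n : Fin k) (hn : (n : ℕ) + 1 = k) (z : Fin k → ℂ)
    (hz : Function.Injective z) (d : Fin ℓ → Fin k → ℂ) (hd : ∀ i, Function.Injective (d i))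
    (hd0 : ∀ i a, d i a ≠ 0) :
    ∃ (P₀ P : Matrix (Fin k × Fin ℓ) (Fin k × Fin ℓ) ℂ) (E : Matrix (Fin k × Fin ℓ) (Fin ℓ) ℂ)
      (F : Matrix (Fin ℓ) (Fin k × Fin ℓ) ℂ), IsUnit P₀ ∧ IsUnit P ∧
      P₀ * diagonal (fun p => z p.1) * P₀⁻¹ =
        (1 + E * F) * (P * diagonal (fun p => d p.2 p.1) * P⁻¹) ∧
      F * E = diagonal (fun i => (∏ a, z a) * (∏ a, d i a)⁻¹ - 1) := by
  choose σ hσ hσn using fun i => one_block n hn z (d i) hz (hd i) (hd0 i)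
  have hb : ∀ w : Fin ℓ → Fin k → ℂ, (∀ i, Function.Injective (w i)) →
      IsUnit (blockDiagonal fun i => (vandermonde (w i))ᵀ) ∧
      (blockDiagonal fun i => (vandermonde (w i))ᵀ) * diagonal (fun p => w p.2 p.1) *
        (blockDiagonal fun i => (vandermonde (w i))ᵀ)⁻¹ =
      blockDiagonal fun i => (vandermonde (w i))ᵀ * diagonal (w i) * ((vandermonde (w i))ᵀ)⁻¹ := by
    intro w hw
    have h1 : (blockDiagonal fun i => (vandermonde (w i))ᵀ) *
      (blockDiagonal fun i => ((vandermonde (w i))ᵀ)⁻¹) = 1 := by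
      rw [← blockDiagonal_mul, ← blockDiagonal_one]
      congr 1
      ext1 i
      exact mul_nonsing_inv _ (vand_unit _ (hw i))
    refine ⟨IsUnit.of_mul_eq_one _ h1, ?_⟩
    rw [inv_eq_right_inv h1, blockDiagonal_mul, blockDiagonal_mul, blockDiagonal_diagonal]
  refine ⟨_, _, of fun p j => if p.1 = n ∧ p.2 = j then 1 else 0,
    of fun j p => if p.2 = j then σ j p.1 else 0, (hb (fun _ => z) fun _ => hz).1, (hb d hd).1, ?_, ?_⟩
  · rw [(hb (fun _ => z) fun _ => hz).2, (hb d hd).2]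
    rw [show (fun _ : Fin ℓ => (vandermonde z)ᵀ * diagonal z * ((vandermonde z)ᵀ)⁻¹) = _ from
      funext hσ, blockDiagonal_mul]
    congr 1
    ext ⟨a, i⟩ ⟨b, j⟩
    rw [Matrix.add_apply, blockDiagonal_apply, mul_apply]
    by_cases hij : i = j
    · subst hij
      by_cases ha : a = n
      · simp [ha, one_apply, vecMulVec_apply]
      · simp [ha, one_apply, vecMulVec_apply]
    · simp [hij, one_apply, ite_and]
  · ext i j
    rw [mul_apply, Fintype.sum_prod_type]
    by_cases hij : i = j
    · subst hij
      simp [ite_and, hσn]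
    · simp [ite_and, hij, eq_comm]

lemma roots_aux {k : ℕ} (hk : 1 ≤ k) (c : ℂ) (hc : c ≠ 0) : ∃ z : Fin k → ℂ,
    Function.Injective z ∧ (∀ w, w ^ k = c ↔ ∃ a, z a = w) ∧ ∏ a, z a = (-1) ^ (k - 1) * c := by
  obtain ⟨α, hα⟩ := IsAlgClosed.exists_pow_nat_eq c (n := k) (by omega)
  have hα0 : α ≠ 0 := by rintro rfl; rw [zero_pow (by omega)] at hα; exact hc hα.symm
  have hζ := Complex.isPrimitiveRoot_exp k (by omega)
  set ζ := Complex.exp (2 * Real.pi * Complex.I / k)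
  have hX := X_pow_sub_C_eq_prod hζ (by omega) hα
  rw [← Fin.prod_univ_eq_prod_range (fun i => Polynomial.X - Polynomial.C (ζ ^ i * α))] at hX
  have hev : ∀ w : ℂ, w ^ k - c = ∏ a : Fin k, (w - ζ ^ (a : ℕ) * α) := by
    intro w
    have := congrArg (Polynomial.eval w) hX
    simpa [Polynomial.eval_prod] using this
  refine ⟨fun a => ζ ^ (a : ℕ) * α, ?_, ?_, ?_⟩
  · intro a b h
    exact Fin.ext (hζ.pow_inj a.2 b.2 (mul_right_cancel₀ hα0 h))
  · intro w
    rw [← sub_eq_zero, hev, Finset.prod_eq_zero_iff]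
    simp only [Finset.mem_univ, true_and, sub_eq_zero]
    exact ⟨fun ⟨a, h⟩ => ⟨a, h.symm⟩, fun ⟨a, h⟩ => ⟨a, h.symm⟩⟩
  · have := hev 0
    simp only [zero_sub, zero_pow (show k ≠ 0 by omega), Finset.prod_neg, Finset.card_univ, Fintype.card_fin] at this
    have h2 : ((-1 : ℂ) ^ k) * (-1) ^ k = 1 := by rw [← mul_pow]; simp
    have h3 : (-1 : ℂ) ^ k = (-1) ^ (k - 1) * (-1) := by rw [← pow_succ]; congr 1; omega
    calc _ = ((-1 : ℂ) ^ k * (-1) ^ k) * ∏ a : Fin k, ζ ^ (a : ℕ) * α := by rw [h2, one_mul]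
      _ = (-1) ^ k * (-c) := by rw [this]; ring
      _ = _ := by rw [h3]; ring

lemma eig_finrank {ι : Type*} [Fintype ι] [DecidableEq ι] (P : Matrix ι ι ℂ) (hP : IsUnit P)
    (d : ι → ℂ) (z : ℂ) :
    Module.finrank ℂ (Module.End.eigenspace (P * diagonal d * P⁻¹).mulVecLin z) =
      Fintype.card {i // d i = z} := by
  have hPd := (isUnit_iff_isUnit_det _).1 hP
  have h1 : (P * diagonal d * P⁻¹).mulVecLin - z • (1 : Module.End ℂ (ι → ℂ)) =
      (P * diagonal (fun i => d i - z) * P⁻¹).mulVecLin := by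
    have : P * diagonal (fun i => d i - z) * P⁻¹ = P * diagonal d * P⁻¹ - z • 1 := by
      have h : diagonal (fun i => d i - z) = diagonal d - z • (1 : Matrix ι ι ℂ) := by
        ext i j; by_cases h : i = j <;> simp [h]
      rw [h, mul_sub, sub_mul]
      simp [mul_nonsing_inv _ hPd]
    rw [this]
    ext v
    simp [sub_mulVec]
  rw [Module.End.eigenspace_def, h1]
  have h2 := LinearMap.finrank_range_add_finrank_ker (P * diagonal (fun i => d i - z) * P⁻¹).mulVecLin
  have h3 : Module.finrank ℂ (LinearMap.range (P * diagonal (fun i => d i - z) * P⁻¹).mulVecLin) =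
      Fintype.card {i // d i - z ≠ 0} := by
    change Matrix.rank _ = _
    rw [rank_mul_eq_left_of_isUnit_det _ _ (isUnit_nonsing_inv_det _ hPd),
      rank_mul_eq_right_of_isUnit_det _ _ hPd, rank_diagonal]
  have h4 : Fintype.card {i // d i - z ≠ 0} = Fintype.card ι - Fintype.card {i // d i = z} := by
    rw [← Fintype.card_subtype_compl]
    simp [sub_eq_zero]
  have h5 := Fintype.card_subtype_le (fun i => d i = z)
  rw [h3, h4, Module.finrank_fintype_fun_eq_card] at h2
  omega

def idxf {k ℓ : ℕ} (i : Fin (ℓ + 1)) (a : Fin (k + 1)) : Fin (k + 1 + 1) :=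
  if a = Fin.last k then (if i = Fin.last ℓ then Fin.last (k + 1) else (Fin.last k).castSucc)
  else a.castSucc

lemma idxf_val {k ℓ : ℕ} (i : Fin (ℓ + 1)) (a : Fin (k + 1)) : (idxf i a : ℕ) =
    if (a : ℕ) = k then (if (i : ℕ) = ℓ then k + 1 else k) else a := by
  unfold idxf
  split_ifs <;> simp_all [Fin.ext_iff]

lemma idx_card {k ℓ : ℕ} (j : Fin (k + 1 + 1)) :
    ({q : Fin (k + 1) × Fin (ℓ + 1) | idxf q.2 q.1 = j}).ncard =
      if (j : ℕ) < k then ℓ + 1 else if (j : ℕ) = k then ℓ else 1 := by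
  by_cases hj : (j : ℕ) < k
  · rw [if_pos hj]
    have : {q : Fin (k + 1) × Fin (ℓ + 1) | idxf q.2 q.1 = j} =
        (fun i => ((⟨j, by omega⟩ : Fin (k + 1)), i)) '' (Set.univ : Set (Fin (ℓ + 1))) := by
      ext ⟨a, i⟩
      simp only [Set.mem_ofPred_eq, Set.image_univ, Set.mem_range, Prod.mk.injEq]
      rw [Fin.ext_iff, idxf_val]
      constructor
      · intro h
        refine ⟨i, Fin.ext ?_, rfl⟩
        simp only
        split_ifs at h <;> omega
      · rintro ⟨i', h, h'⟩
        rw [Fin.ext_iff] at h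
        simp only at h
        split_ifs <;> omega
    rw [this, Set.ncard_image_of_injective _ (fun a b h => by simpa using h), Set.ncard_univ]
    simp
  · rw [if_neg hj]
    by_cases hjk : (j : ℕ) = k
    · rw [if_pos hjk]
      have : {q : Fin (k + 1) × Fin (ℓ + 1) | idxf q.2 q.1 = j} =
          (fun i : Fin ℓ => (Fin.last k, i.castSucc)) '' (Set.univ : Set (Fin ℓ)) := by
        ext ⟨a, i⟩
        simp only [Set.mem_ofPred_eq, Set.image_univ, Set.mem_range, Prod.mk.injEq]
        rw [Fin.ext_iff, idxf_val]
        have ha := a.2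
        have hi := i.2
        constructor
        · intro h
          refine ⟨⟨i, ?_⟩, Fin.ext ?_, rfl⟩
          · split_ifs at h <;> omega
          · simp only [Fin.val_last]
            split_ifs at h <;> omega
        · rintro ⟨i', h, h'⟩
          rw [Fin.ext_iff] at h h'
          have hi' := i'.2
          simp only [Fin.val_last, Fin.val_castSucc] at h h'
          split_ifs <;> omega
      rw [this, Set.ncard_image_of_injective _ (fun a b h => by simpa using h), Set.ncard_univ]
      simp
    · rw [if_neg hjk]
      have : {q : Fin (k + 1) × Fin (ℓ + 1) | idxf q.2 q.1 = j} = {(Fin.last k, Fin.last ℓ)} := by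
        ext ⟨a, i⟩
        simp only [Set.mem_ofPred_eq, Set.mem_singleton_iff, Prod.mk.injEq]
        rw [Fin.ext_iff, idxf_val, Fin.ext_iff, Fin.ext_iff, Fin.val_last, Fin.val_last]
        have ha := a.2
        have hi := i.2
        have hj := j.2
        split_ifs <;> omega
      rw [this, Set.ncard_singleton]

set_option maxHeartbeats 800000 in
lemma main_aux {k ℓ : ℕ} (ε : ℂ) (hε : ε ≠ 0) (r : ℤ)
    (lam : Fin (ℓ + 1) → ℂ) (ξ : Fin (k + 1 + 1) → ℂ) (η₁ η₂ : ℂ)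
    (hη₁ : η₁ = (-1 : ℂ) ^ k * ε ^ r * (∏ j : Fin (k + 1), ξ j.castSucc)⁻¹)
    (hη₂ : η₂ = (-1 : ℂ) ^ k * ε ^ r * (ξ (Fin.last (k + 1)))⁻¹ *
      (∏ j : Fin k, ξ j.castSucc.castSucc)⁻¹)
    (hlam0 : ∀ i, lam i ≠ 0)
    (hlam1 : ∀ i, lam i ≠ 1) (hlamη : ∀ i, lam i ≠ η₁)
    (hξ0 : ∀ j, ξ j ≠ 0) (hξinj : Function.Injective ξ)
    (hξk : ∀ j, ξ j ^ (k + 1) ≠ ε ^ r)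
    (hfuchs : (∏ i, lam i) * (∏ j : Fin k, ξ j.castSucc.castSucc ^ (ℓ + 1)) *
        ξ (Fin.last k).castSucc ^ ℓ * ξ (Fin.last (k + 1)) =
      (-1 : ℂ) ^ (k * (ℓ + 1)) * (ε ^ r) ^ (ℓ + 1)) :
    ∃ (X : Fin (ℓ + 1) → Matrix (Fin ((k + 1) * (ℓ + 1))) (Fin ((k + 1) * (ℓ + 1))) ℂ)
      (Ω : Matrix (Fin ((k + 1) * (ℓ + 1))) (Fin ((k + 1) * (ℓ + 1))) ℂ),
      IsUnit Ω ∧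
      (∀ i, IsUnit (X i) ∧ (X i - 1).rank = 1 ∧ (X i).det = lam i) ∧
      Ω ^ (k + 1) = (ε ^ r) • (1 : Matrix (Fin ((k + 1) * (ℓ + 1))) (Fin ((k + 1) * (ℓ + 1))) ℂ) ∧
      (∀ z : ℂ, z ^ (k + 1) = ε ^ r →
        Module.finrank ℂ (Module.End.eigenspace Ω.mulVecLin z) = ℓ + 1) ∧
      (∃ (P : Matrix (Fin ((k + 1) * (ℓ + 1))) (Fin ((k + 1) * (ℓ + 1))) ℂ)
          (d : Fin ((k + 1) * (ℓ + 1)) → ℂ),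
        IsUnit P ∧
        ((List.ofFn X).prod)⁻¹ * Ω = P * Matrix.diagonal d * P⁻¹ ∧
        ∀ j : Fin (k + 1 + 1),
          ({p | d p = ξ j}).ncard =
            if (j : ℕ) < k then ℓ + 1
            else if (j : ℕ) = k then ℓ
            else 1) ∧
      (∀ U : Submodule ℂ (Fin ((k + 1) * (ℓ + 1)) → ℂ),
        (∀ i, U.map (X i).mulVecLin ≤ U) → U.map Ω.mulVecLin ≤ U →
          U = ⊥ ∨ U = ⊤) := by
  have hc : ε ^ r ≠ 0 := zpow_ne_zero _ hε
  generalize ε ^ r = c at *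
  obtain ⟨z, hzinj, hz, hzprod⟩ := roots_aux (k := k + 1) (by omega) c hc
  rw [Nat.add_sub_cancel] at hzprod
  have hg : (∏ j : Fin k, ξ j.castSucc.castSucc) ≠ 0 := Finset.prod_ne_zero_iff.2 fun j _ => hξ0 _
  have hx := hξ0 (Fin.last k).castSucc
  have hy := hξ0 (Fin.last (k + 1))
  have hxy : ξ (Fin.last k).castSucc ≠ ξ (Fin.last (k + 1)) := fun h => by
    have := hξinj h
    simp [Fin.ext_iff] at this
  have hs : ((-1 : ℂ) ^ k) ≠ 0 := pow_ne_zero _ (by simp)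
  have hη₁0 : η₁ ≠ 0 := by
    rw [hη₁]
    exact mul_ne_zero (mul_ne_zero hs hc) (inv_ne_zero (Finset.prod_ne_zero_iff.2 fun j _ => hξ0 _))
  have hηne : η₂ ≠ η₁ := by
    rw [hη₁, hη₂, Fin.prod_univ_castSucc]
    intro h
    field_simp at h
    exact hxy (by first | exact h | exact h.symm)
  have hprod : ∏ i, lam i = η₁ ^ (ℓ + 1 - 1) * η₂ := by
    rw [Nat.add_sub_cancel, hη₁, hη₂, Fin.prod_univ_castSucc (fun j : Fin (k + 1) => ξ j.castSucc)]
    rw [Finset.prod_pow, pow_mul] at hfuchs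
    generalize (∏ j : Fin k, ξ j.castSucc.castSucc) = g at *
    generalize ξ (Fin.last k).castSucc = x at *
    generalize ξ (Fin.last (k + 1)) = y at *
    generalize (-1 : ℂ) ^ k = s at *
    have h1 : g ^ (ℓ + 1) * x ^ ℓ * y ≠ 0 := by positivity
    apply mul_right_cancel₀ h1
    rw [← mul_assoc, ← mul_assoc, hfuchs, mul_pow, inv_pow, mul_pow, mul_pow]
    field_simp
    ring
  -- block data
  let idx : Fin (ℓ + 1) → Fin (k + 1) → Fin (k + 1 + 1) := fun i a => idxf i a
  have hidx : ∀ i, Function.Injective (idx i) := by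
    intro i a b h
    have ha := a.2
    have hb := b.2
    simp only [idx, idxf, Fin.ext_iff] at h ⊢
    split_ifs at h <;> simp_all [Fin.ext_iff] <;> omega
  obtain ⟨P₀, P, E, F, hP₀, hP, hAB, hFE⟩ := blocks (Fin.last k) (by simp) z hzinj
    (fun i a => ξ (idx i a)) (fun i => hξinj.comp (hidx i)) (fun i a => hξ0 _)
  have hFE' : F * E = diagonal (fun i => if i = Fin.last ℓ then η₂ - 1 else η₁ - 1) := by
    rw [hFE]
    congr 1
    ext i
    have hne : ∀ j : Fin k, j.castSucc ≠ Fin.last k := fun j => (Fin.castSucc_lt_last j).ne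
    by_cases hi : i = Fin.last ℓ
    · simp only [hi, if_true, hzprod, hη₂, Fin.prod_univ_castSucc, idx, idxf, hne, if_false, mul_inv]
      ring
    · simp only [hi, if_true, hzprod, hη₁, Fin.prod_univ_castSucc, idx, idxf, hne, if_false, mul_inv]
  -- reindex
  let e : Fin (k + 1) × Fin (ℓ + 1) ≃ Fin ((k + 1) * (ℓ + 1)) := finProdFinEquiv
  let f := Matrix.reindexAlgEquiv ℂ ℂ e
  have hfdiag : ∀ w : Fin (k + 1) × Fin (ℓ + 1) → ℂ, f (diagonal w) = diagonal (w ∘ e.symm) := by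
    intro w
    simp [f, coe_reindexAlgEquiv, reindex_apply, submatrix_diagonal_equiv]
  have hfinv : ∀ Q, IsUnit Q → f Q⁻¹ = (f Q)⁻¹ := by
    intro Q hQ
    symm
    apply inv_eq_right_inv
    rw [← map_mul, mul_nonsing_inv _ ((isUnit_iff_isUnit_det _).1 hQ), map_one]
  set z' : Fin ((k + 1) * (ℓ + 1)) → ℂ := (fun p : Fin (k + 1) × Fin (ℓ + 1) => z p.1) ∘ e.symm with hz'
  set d' : Fin ((k + 1) * (ℓ + 1)) → ℂ :=
    (fun p : Fin (k + 1) × Fin (ℓ + 1) => ξ (idx p.2 p.1)) ∘ e.symm with hd'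
  let E' := E.submatrix e.symm (id : Fin (ℓ + 1) → _)
  let F' := F.submatrix (id : Fin (ℓ + 1) → _) e.symm
  have hFE'' : F' * E' = diagonal (fun i => if i = Fin.last ℓ then η₂ - 1 else η₁ - 1) := by
    rw [← hFE']
    simp only [F', E', submatrix_mul_equiv, submatrix_id_id]
  have hEF : 1 + E' * F' = f (1 + E * F) := by
    rw [map_add, map_one]
    congr 1
  obtain ⟨u, φ, hoff, hdiag, hY⟩ := core (Fin.last ℓ) lam η₁ η₂ hη₁0 hηne hprod hlamη E' F' hFE''
  have hP₀' : IsUnit (f P₀) := hP₀.map f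
  have hP' : IsUnit (f P) := hP.map f
  have hA : f P₀ * diagonal z' * (f P₀)⁻¹ = (1 + E' * F') * (f P * diagonal d' * (f P)⁻¹) := by
    have := congrArg f hAB
    rw [map_mul, map_mul, map_mul, map_mul, map_mul, hfdiag, hfdiag, hfinv _ hP₀, hfinv _ hP] at this
    rw [hEF]; exact this
  have hconj : ∀ (Q : Matrix (Fin ((k + 1) * (ℓ + 1))) (Fin ((k + 1) * (ℓ + 1))) ℂ), IsUnit Q →
      ∀ w (s : ℕ), (Q * diagonal w * Q⁻¹) ^ s = Q * diagonal (fun i => w i ^ s) * Q⁻¹ := by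
    intro Q hQ w s
    have hQ' := (isUnit_iff_isUnit_det _).1 hQ
    induction s with
    | zero => simp [mul_nonsing_inv _ hQ']
    | succ s ih =>
      rw [pow_succ, ih]
      calc _ = Q * diagonal (fun i => w i ^ s) * (Q⁻¹ * Q) * diagonal w * Q⁻¹ := by
            simp only [Matrix.mul_assoc]
        _ = _ := by
          rw [nonsing_inv_mul _ hQ', Matrix.mul_one, Matrix.mul_assoc Q, diagonal_mul_diagonal]
          simp only [pow_succ]
  have hAk : (f P₀ * diagonal z' * (f P₀)⁻¹) ^ (k + 1) = c • 1 := by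
    rw [hconj _ hP₀']
    have : (fun i => z' i ^ (k + 1)) = fun _ => c := by
      ext i
      exact (hz _).2 ⟨_, rfl⟩
    rw [this, show (diagonal fun _ => c) = c • (1 : Matrix (Fin ((k + 1) * (ℓ + 1))) (Fin ((k + 1) * (ℓ + 1))) ℂ) from
      (smul_one_eq_diagonal c).symm]
    simp [mul_nonsing_inv _ ((isUnit_iff_isUnit_det _).1 hP₀')]
  have hAu : IsUnit (f P₀ * diagonal z' * (f P₀)⁻¹) := by
    apply (isUnit_pow_iff (n := k + 1) (by omega)).1
    rw [hAk]
    exact (isUnit_one.smul (Units.mk0 c hc))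
  have hYu : IsUnit (1 + E' * F') := by
    rw [hA] at hAu
    exact isUnit_of_mul_isUnit_left hAu
  have hBu : IsUnit ((f P * diagonal d' * (f P)⁻¹) ^ (k + 1) - c • (1 : Matrix _ _ ℂ)) := by
    have h1 : (f P * diagonal d' * (f P)⁻¹) ^ (k + 1) - c • (1 : Matrix _ _ ℂ) =
      f P * diagonal (fun i => d' i ^ (k + 1) - c) * (f P)⁻¹ := by
      rw [hconj _ hP']
      have h : diagonal (fun i => d' i ^ (k + 1) - c) = diagonal (fun i => d' i ^ (k + 1)) - c • (1 : Matrix _ _ ℂ) := by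
        ext i j; by_cases h : i = j <;> simp [h]
      rw [h, mul_sub, sub_mul]
      simp [mul_nonsing_inv _ ((isUnit_iff_isUnit_det _).1 hP')]
    rw [h1, isUnit_iff_isUnit_det, det_conj hP', det_diagonal]
    exact (Finset.prod_ne_zero_iff.2 fun i _ => sub_ne_zero.2 (hξk _)).isUnit
  refine ⟨fun i => 1 + vecMulVec (u i) (φ i), f P₀ * diagonal z' * (f P₀)⁻¹, hAu, ?_, hAk, ?_,
    ⟨f P, d', hP', ?_, ?_⟩, ?_⟩
  · intro i
    have hdet : ((1 : Matrix (Fin ((k + 1) * (ℓ + 1))) (Fin ((k + 1) * (ℓ + 1))) ℂ) +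
        vecMulVec (u i) (φ i)).det = lam i := by
      rw [det_vmv, hdiag]; ring
    refine ⟨?_, ?_, hdet⟩
    · rw [isUnit_iff_isUnit_det, hdet]; exact (hlam0 i).isUnit
    · rw [add_sub_cancel_left]
      apply le_antisymm (rank_vecMulVec_le _ _)
      rw [Nat.one_le_iff_ne_zero]
      intro h
      have h' : vecMulVec (u i) (φ i) = 0 := by
        rw [Matrix.rank, Submodule.finrank_eq_zero, LinearMap.range_eq_bot] at h
        exact (toLin' (R := ℂ)).injective (by simpa [toLin'_apply'] using h)
      rw [h'] at hdet
      simp at hdet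
      exact hlam1 i hdet.symm
  · intro w hw
    rw [eig_finrank _ hP₀']
    obtain ⟨a, rfl⟩ := (hz w).1 hw
    rw [Fintype.card_congr (β := Fin (ℓ + 1)), Fintype.card_fin]
    refine ⟨fun p => (e.symm p.1).2, fun i => ⟨e (a, i), by simp [hz']⟩, ?_, ?_⟩
    · rintro ⟨p, hp⟩
      have h : (e.symm p).1 = a := hzinj hp
      apply Subtype.ext
      simp only [← h, Prod.mk.eta, Equiv.apply_symm_apply]
    · intro i; simp
  · rw [hY, hA, ← Matrix.mul_assoc, nonsing_inv_mul _ ((isUnit_iff_isUnit_det _).1 hYu), Matrix.one_mul]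
  · intro j
    have h1 : {p | d' p = ξ j} = e '' {q | idx q.2 q.1 = j} := by
      ext p
      rw [Equiv.image_eq_preimage_symm]
      simp only [Set.mem_ofPred_eq, Set.mem_preimage, hd', Function.comp]
      exact hξinj.eq_iff
    rw [h1, Set.ncard_image_of_injective _ e.injective]
    exact idx_card j
  · intro U hX hU
    exact irred u φ hoff c _ (f P * diagonal d' * (f P)⁻¹) hAk hBu (1 + E' * F') hY.symm hYu hA U hX hU

end

/-- main construction theorem for turbines without shaft T_{n,k,ℓ}:
realization of the numerical local data (ε; λ₁,…,λ_ℓ; ξ₁,…,ξ_{k+1}; ℓ,…,ℓ,ℓ−1,1)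
by pseudo-reflections X₁,…,X_ℓ and a matrix Ω₀ with Ω₀^k = ε^r·I acting
irreducibly on ℂ^{kℓ}. -/
theorem stmt_15 {k ℓ : ℕ} (hk : 1 ≤ k) (hℓ : 2 ≤ ℓ) (ε : ℂ) (hε : ε ≠ 0) (r : ℤ)
    (lam : Fin ℓ → ℂ) (ξ : Fin (k + 1) → ℂ) (η₁ η₂ : ℂ)
    (hη₁ : η₁ = (-1 : ℂ) ^ (k - 1) * ε ^ r * (∏ j : Fin k, ξ j.castSucc)⁻¹)
    (hη₂ : η₂ = (-1 : ℂ) ^ (k - 1) * ε ^ r * (ξ (Fin.last k))⁻¹ *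
      (∏ j : Fin (k - 1), ξ (Fin.castLE (by omega) j))⁻¹)
    (hlam0 : ∀ i, lam i ≠ 0)
    (hlam1 : ∀ i, lam i ≠ 1) (hlamη : ∀ i, lam i ≠ η₁)
    (hη₁1 : η₁ ≠ 1) (hη₂1 : η₂ ≠ 1)
    (hξ0 : ∀ j, ξ j ≠ 0) (hξinj : Function.Injective ξ)
    (hξsum₁ : ∑ j : Fin k, ξ j.castSucc ≠ 0)
    (hξsum₂ : (∑ j : Fin (k - 1), ξ (Fin.castLE (by omega) j)) + ξ (Fin.last k) ≠ 0)
    (hξk : ∀ j, ξ j ^ k ≠ ε ^ r)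
    (hfuchs : (∏ i, lam i) * (∏ j : Fin (k - 1), ξ (Fin.castLE (by omega) j) ^ ℓ) *
        ξ (⟨k - 1, by omega⟩ : Fin (k + 1)) ^ (ℓ - 1) * ξ (Fin.last k) =
      (-1 : ℂ) ^ ((k - 1) * ℓ) * (ε ^ r) ^ ℓ) :
    ∃ (X : Fin ℓ → Matrix (Fin (k * ℓ)) (Fin (k * ℓ)) ℂ)
      (Ω : Matrix (Fin (k * ℓ)) (Fin (k * ℓ)) ℂ),
      IsUnit Ω ∧
      (∀ i, IsUnit (X i) ∧ (X i - 1).rank = 1 ∧ (X i).det = lam i) ∧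
      Ω ^ k = (ε ^ r) • (1 : Matrix (Fin (k * ℓ)) (Fin (k * ℓ)) ℂ) ∧
      (∀ z : ℂ, z ^ k = ε ^ r →
        Module.finrank ℂ (Module.End.eigenspace Ω.mulVecLin z) = ℓ) ∧
      (∃ (P : Matrix (Fin (k * ℓ)) (Fin (k * ℓ)) ℂ) (d : Fin (k * ℓ) → ℂ),
        IsUnit P ∧
        ((List.ofFn X).prod)⁻¹ * Ω = P * Matrix.diagonal d * P⁻¹ ∧
        ∀ j : Fin (k + 1),
          ({p | d p = ξ j}).ncard =
            if (j : ℕ) < k - 1 then ℓ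
            else if (j : ℕ) = k - 1 then ℓ - 1
            else 1) ∧
      (∀ U : Submodule ℂ (Fin (k * ℓ) → ℂ),
        (∀ i, U.map (X i).mulVecLin ≤ U) → U.map Ω.mulVecLin ≤ U →
          U = ⊥ ∨ U = ⊤) := by
  obtain ⟨k, rfl⟩ : ∃ k', k = k' + 1 := ⟨k - 1, by omega⟩
  obtain ⟨ℓ, rfl⟩ : ∃ l', ℓ = l' + 1 := ⟨ℓ - 1, by omega⟩
  exact main_aux ε hε r lam ξ η₁ η₂ hη₁ hη₂ hlam0 hlam1 hlamη hξ0 hξinj hξk hfuchs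
end

section
/- Let k, ℓ ≥ 1 be integers, m = kℓ + 1, and let c be a nonzero complex number. Let X₁, …, X_ℓ ∈ GL_m(ℂ) be pseudo-reflections and let W ∈ GL_m(ℂ) be such that c·W^{−k} is a pseudo-reflection whose special eigenvalue λ₀ satisfies λ₀ ≠ 1. If the family {X₁, …, X_ℓ, W} acts irreducibly on ℂ^m, then W is diagonalizable and conjugate in GL_m(ℂ) to ζ₁·I_ℓ ⊕ ⋯ ⊕ ζ_k·I_ℓ ⊕ (b), where ζ₁, …, ζ_k are the k distinct k-th roots of c and b is a complex number with b^k = c·λ₀^{−1}, so in particular b^k ≠ c. -/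
open Polynomial

lemma aux_diag {n : ℕ} (W : Matrix (Fin n) (Fin n) ℂ) (p : ℂ[X]) (hp : Squarefree p)
    (h0 : aeval W p = 0) :
    ∃ (P : Matrix (Fin n) (Fin n) ℂ) (d : Fin n → ℂ), IsUnit P ∧
      W = P * Matrix.diagonal d * P⁻¹ := by
  have h1 : aeval (Matrix.toLin' W) p = 0 := by
    have := congrArg Matrix.toLinAlgEquiv' h0
    rw [map_zero, ← Polynomial.aeval_algHom_apply] at this
    exact this
  have hs : Module.End.IsSemisimple (Matrix.toLin' W) :=
    Module.End.isSemisimple_of_squarefree_aeval_eq_zero hp h1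
  have htop := hs.iSup_eigenspace_eq_top
  let t : Set (Fin n → ℂ) := {v | ∃ μ : ℂ, W.mulVec v = μ • v}
  have hspan : Submodule.span ℂ t = ⊤ := by
    rw [eq_top_iff, ← htop, iSup_le_iff]
    intro μ v hv
    apply Submodule.subset_span
    refine ⟨μ, ?_⟩
    simpa using Module.End.mem_eigenspace_iff.1 hv
  obtain ⟨b, hbt, hbs, hli⟩ := exists_linearIndependent ℂ t
  rw [hspan] at hbs
  let B := Module.Basis.mk hli (by simp [hbs])
  have : Fintype b := FiniteDimensional.fintypeBasisIndex B
  have hcard : Fintype.card b = n := by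
    have := Module.finrank_eq_card_basis B
    simpa using this.symm
  let e : b ≃ Fin n := Fintype.equivFinOfCardEq hcard
  let B' := B.reindex e
  have hB' : ∀ i, ∃ μ : ℂ, W.mulVec (B' i) = μ • B' i := by
    intro i
    have : B' i = ((e.symm i : b) : Fin n → ℂ) := by simp [B', B]
    rw [this]
    exact hbt (e.symm i).2
  choose d hd using hB'
  let P : Matrix (Fin n) (Fin n) ℂ := (Pi.basisFun ℂ (Fin n)).toMatrix B'
  have hP : IsUnit P := by
    have := (Pi.basisFun ℂ (Fin n)).invertibleToMatrix B'
    exact isUnit_of_invertible _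
  refine ⟨P, d, hP, ?_⟩
  have hmul : W * P = P * Matrix.diagonal d := by
    ext i j
    have := congrFun (hd j) i
    rw [Matrix.mul_diagonal]
    simpa [Matrix.mul_apply, P, Module.Basis.toMatrix_apply, Matrix.mulVec, dotProduct, mul_comm] using this
  rw [← hmul, Matrix.mul_assoc, Matrix.mul_nonsing_inv _ ((Matrix.isUnit_iff_isUnit_det _).1 hP), mul_one]

lemma aux_rank1 {n : ℕ} (B : Matrix (Fin n) (Fin n) ℂ) (h : B.rank = 1) :
    B * B = ((1 + B).det - 1) • B := by
  have h' : Module.finrank ℂ (LinearMap.range B.mulVecLin) = 1 := h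
  obtain ⟨v, hv⟩ := finrank_eq_one_iff'.1 h'
  have : ∀ j, ∃ a : ℂ, a • (v : Fin n → ℂ) = B.col j := by
    intro j
    obtain ⟨a, ha⟩ := hv.2 ⟨B.col j, ⟨Pi.single j 1, by simp⟩⟩
    exact ⟨a, congrArg Subtype.val ha⟩
  choose w hw using this
  have hB : B = Matrix.replicateCol Unit (v : Fin n → ℂ) * Matrix.replicateRow Unit w := by
    ext i j
    have := congrFun (hw j) i
    simp [Matrix.mul_apply] at this ⊢
    rw [← this, mul_comm]
  rw [hB, Matrix.det_one_add_replicateCol_mul_replicateRow]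
  ext i j
  simp [Matrix.mul_apply, dotProduct, Finset.sum_mul]
  refine Finset.sum_congr rfl fun x _ => by ring

lemma aux_sqf (k : ℕ) (hk : 1 ≤ k) (a b : ℂ) (ha : a ≠ 0) (hb : b ≠ 0) (hab : a ≠ b) :
    Squarefree ((X ^ k - C a) * (X ^ k - C b) : ℂ[X]) := by
  have hk' : (k : ℂ) ≠ 0 := by exact_mod_cast (by omega : k ≠ 0)
  have h1 : IsCoprime (X ^ k - C a : ℂ[X]) (X ^ k - C b) := by
    refine ⟨C (b - a)⁻¹, - C (b - a)⁻¹, ?_⟩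
    have : (b - a)⁻¹ * (b - a) = 1 := inv_mul_cancel₀ (sub_ne_zero.2 hab.symm)
    have h2 : C (b - a)⁻¹ * (C b - C a) = (1 : ℂ[X]) := by
      rw [← C_sub, ← C_mul, this, C_1]
    linear_combination h2
  exact ((separable_X_pow_sub_C a hk' ha).mul (separable_X_pow_sub_C b hk' hb) h1).squarefree

lemma aux_rankconj {n : ℕ} (P : Matrix (Fin n) (Fin n) ℂ) (hP : IsUnit P) (d : Fin n → ℂ) :
    (P * Matrix.diagonal d * P⁻¹).rank = (Finset.univ.filter fun i => d i ≠ 0).card := by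
  have hdet := (Matrix.isUnit_iff_isUnit_det _).1 hP
  rw [Matrix.rank_mul_eq_left_of_isUnit_det _ _ (by
      rw [Matrix.det_nonsing_inv]; simpa using hdet), Matrix.rank_mul_eq_right_of_isUnit_det _ _ hdet,
    Matrix.rank_diagonal, Fintype.card_subtype]

lemma aux_mult {n ℓ : ℕ} (hℓ : 1 ≤ ℓ) (X : Fin ℓ → Matrix (Fin n) (Fin n) ℂ)
    (W : Matrix (Fin n) (Fin n) ℂ) (hX : ∀ i, (X i - 1).rank = 1)
    (hirr : ∀ U : Submodule ℂ (Fin n → ℂ),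
      (∀ i, U.map (X i).mulVecLin ≤ U) → U.map W.mulVecLin ≤ U → U = ⊥ ∨ U = ⊤) (z : ℂ) :
    n ≤ (W - z • (1 : Matrix (Fin n) (Fin n) ℂ)).rank + ℓ := by
  by_contra! hlt
  set M := W - z • (1 : Matrix (Fin n) (Fin n) ℂ) with hM
  let Φ : (Fin n → ℂ) →ₗ[ℂ] (LinearMap.range M.mulVecLin ×
      (∀ i, LinearMap.range (X i - 1).mulVecLin)) :=
    LinearMap.prod M.mulVecLin.rangeRestrict
      (LinearMap.pi fun i => (X i - 1).mulVecLin.rangeRestrict)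
  have hr1 : Module.finrank ℂ (LinearMap.range M.mulVecLin) = M.rank := rfl
  have hr2 : ∀ i, Module.finrank ℂ (LinearMap.range (X i - 1).mulVecLin) = 1 := hX
  have hker : LinearMap.ker Φ ≠ ⊥ := by
    apply LinearMap.ker_ne_bot_of_finrank_lt
    rw [Module.finrank_prod, Module.finrank_pi_fintype, hr1]
    simp only [hr2]
    simpa using hlt
  have hmem : ∀ v, v ∈ LinearMap.ker Φ → W.mulVec v = z • v ∧ ∀ i, (X i).mulVec v = v := by
    intro v hv
    have hv' : Φ v = 0 := hv
    have h1 := congrArg Subtype.val (congrArg Prod.fst hv')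
    have h2 := fun i => congrArg Subtype.val (congrFun (congrArg Prod.snd hv') i)
    constructor
    · have : M.mulVec v = 0 := h1
      rw [hM, Matrix.sub_mulVec, Matrix.smul_mulVec, Matrix.one_mulVec, sub_eq_zero] at this
      exact this
    · intro i
      have : (X i - 1).mulVec v = 0 := h2 i
      rw [Matrix.sub_mulVec, Matrix.one_mulVec, sub_eq_zero] at this
      exact this
  rcases hirr (LinearMap.ker Φ) (by
      rintro i _ ⟨v, hv, rfl⟩
      rw [Matrix.mulVecLin_apply, (hmem v hv).2 i]
      exact hv) (by
      rintro _ ⟨v, hv, rfl⟩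
      rw [Matrix.mulVecLin_apply, (hmem v hv).1]
      exact Submodule.smul_mem _ _ hv) with h | h
  · exact hker h
  · have hX1 : X ⟨0, hℓ⟩ = 1 := by
      apply Matrix.toLin'.injective
      ext1 i
      ext1
      have := (hmem (Pi.single i 1) (h ▸ Submodule.mem_top)).2 ⟨0, hℓ⟩
      simp only [Matrix.toLin'_apply, LinearMap.comp_apply, LinearMap.single_apply, this,
        Matrix.one_mulVec]
    have := hX ⟨0, hℓ⟩
    rw [hX1] at this
    simp at this

theorem stmt_16 {k ℓ : ℕ} (hk : 1 ≤ k) (hℓ : 1 ≤ ℓ) (c : ℂ) (hc : c ≠ 0)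
    (X : Fin ℓ → Matrix (Fin (k * ℓ + 1)) (Fin (k * ℓ + 1)) ℂ)
    (W : Matrix (Fin (k * ℓ + 1)) (Fin (k * ℓ + 1)) ℂ)
    (hX : ∀ i, IsUnit (X i) ∧ (X i - 1).rank = 1)
    (hWu : IsUnit W)
    (lam0 : ℂ)
    (hlam0 : lam0 = (c • (W ^ k)⁻¹ : Matrix (Fin (k * ℓ + 1)) (Fin (k * ℓ + 1)) ℂ).det)
    (hpr : ((c • (W ^ k)⁻¹ : Matrix (Fin (k * ℓ + 1)) (Fin (k * ℓ + 1)) ℂ) - 1).rank = 1)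
    (hlam1 : lam0 ≠ 1)
    (hirr : ∀ U : Submodule ℂ (Fin (k * ℓ + 1) → ℂ),
      (∀ i, U.map (X i).mulVecLin ≤ U) → U.map W.mulVecLin ≤ U → U = ⊥ ∨ U = ⊤) :
    ∃ (b : ℂ) (P : Matrix (Fin (k * ℓ + 1)) (Fin (k * ℓ + 1)) ℂ)
      (d : Fin (k * ℓ + 1) → ℂ),
      b ^ k = c * lam0⁻¹ ∧ b ^ k ≠ c ∧
      IsUnit P ∧ W = P * Matrix.diagonal d * P⁻¹ ∧
      (∀ z : ℂ, z ^ k = c → ({p | d p = z}).ncard = ℓ) ∧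
      ({p | d p = b}).ncard = 1 := by
  have hYu : IsUnit (W ^ k) := hWu.pow k
  have hYd := (Matrix.isUnit_iff_isUnit_det _).1 hYu
  have hl0 : lam0 ≠ 0 := by
    rw [hlam0, Matrix.det_smul, Matrix.det_nonsing_inv]
    exact mul_ne_zero (pow_ne_zero _ hc) (by simpa using hYd.ne_zero)
  have hcl : c ≠ c * lam0⁻¹ := by
    intro h
    apply hlam1
    field_simp at h
    exact h
  obtain ⟨P, d, hP, hW⟩ : ∃ (P : Matrix (Fin (k * ℓ + 1)) (Fin (k * ℓ + 1)) ℂ)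
      (d : Fin (k * ℓ + 1) → ℂ), IsUnit P ∧ W = P * Matrix.diagonal d * P⁻¹ := by
    apply aux_diag W _ (aux_sqf k hk c (c * lam0⁻¹) hc (mul_ne_zero hc (inv_ne_zero hl0)) hcl)
    have hB := aux_rank1 _ hpr
    rw [add_sub_cancel, ← hlam0] at hB
    have hYA : W ^ k * (c • (W ^ k)⁻¹) = c • 1 := by
      rw [Matrix.mul_smul, Matrix.mul_nonsing_inv _ hYd]
    have hAY : (c • (W ^ k)⁻¹) * W ^ k = c • 1 := by
      rw [Matrix.smul_mul, Matrix.nonsing_inv_mul _ hYd]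
    generalize c • (W ^ k)⁻¹ = A at hB hYA hAY
    rw [map_mul]
    simp only [map_sub, map_pow, aeval_X, aeval_C]
    simp only [Algebra.algebraMap_eq_smul_one]
    have e1 : W ^ k - c • 1 = - (W ^ k * (A - 1)) := by
      rw [mul_sub, hYA]; simp
    have e2 : W ^ k - (c * lam0⁻¹) • 1 = - (lam0⁻¹ • ((A - lam0 • 1) * W ^ k)) := by
      rw [sub_mul, hAY, smul_sub, smul_mul_assoc, one_mul, smul_smul, smul_smul,
        inv_mul_cancel₀ hl0, mul_comm c]
      simp
    have e3 : (A - 1) * (A - lam0 • 1) = 0 := by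
      have : A - lam0 • 1 = (A - 1) - (lam0 - 1) • (1 : Matrix _ _ ℂ) := by
        rw [sub_smul]; simp
      rw [this, mul_sub, hB, Matrix.mul_smul, mul_one, sub_self]
    rw [e1, e2, neg_mul_neg, Matrix.mul_smul, mul_assoc, ← mul_assoc (A - 1), e3]
    simp
  have hPd := (Matrix.isUnit_iff_isUnit_det _).1 hP
  have hPQ := Matrix.mul_nonsing_inv _ hPd
  have hQP := Matrix.nonsing_inv_mul _ hPd
  have hconj : ∀ x y : Fin (k * ℓ + 1) → ℂ, (P * Matrix.diagonal x * P⁻¹) *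
      (P * Matrix.diagonal y * P⁻¹) = P * Matrix.diagonal (fun i => x i * y i) * P⁻¹ := by
    intro x y
    rw [← Matrix.diagonal_mul_diagonal]
    calc _ = P * Matrix.diagonal x * (P⁻¹ * P) * Matrix.diagonal y * P⁻¹ := by
          simp only [mul_assoc]
      _ = _ := by rw [hQP]; simp only [mul_assoc, one_mul]
  have hone : P * Matrix.diagonal (fun _ => (1:ℂ)) * P⁻¹ = 1 := by
    rw [Matrix.diagonal_one, mul_one, hPQ]
  have hpow : ∀ j, W ^ j = P * Matrix.diagonal (fun i => d i ^ j) * P⁻¹ := by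
    intro j
    induction j with
    | zero => simp only [pow_zero, hone]
    | succ j ih =>
      rw [pow_succ, ih]
      nth_rw 1 [hW]
      rw [hconj]; simp only [pow_succ]
  have hd0 : ∀ i, d i ≠ 0 := by
    have h := (Matrix.isUnit_iff_isUnit_det _).1 hWu
    rw [hW, Matrix.det_mul, Matrix.det_mul, Matrix.det_diagonal] at h
    have h' := right_ne_zero_of_mul (left_ne_zero_of_mul h.ne_zero)
    intro i
    exact Finset.prod_ne_zero_iff.1 h' i (Finset.mem_univ i)
  have hinv : (W ^ k)⁻¹ = P * Matrix.diagonal (fun i => (d i ^ k)⁻¹) * P⁻¹ := by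
    apply Matrix.inv_eq_right_inv
    rw [hpow, hconj, ← hone]
    congr 3
    funext i
    exact mul_inv_cancel₀ (pow_ne_zero _ (hd0 i))
  have hsm : ∀ (a : ℂ) (x : Fin (k * ℓ + 1) → ℂ), a • (P * Matrix.diagonal x * P⁻¹) =
      P * Matrix.diagonal (fun i => a * x i) * P⁻¹ := by
    intro a x
    rw [← Matrix.smul_mul, ← Matrix.mul_smul, ← Matrix.diagonal_smul]
    rfl
  have hsb : ∀ (x y : Fin (k * ℓ + 1) → ℂ), (P * Matrix.diagonal x * P⁻¹) -
      (P * Matrix.diagonal y * P⁻¹) = P * Matrix.diagonal (fun i => x i - y i) * P⁻¹ := by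
    intro x y
    rw [← Matrix.diagonal_sub, mul_sub, sub_mul]
  rw [hinv, hsm] at hpr hlam0
  rw [← hone] at hpr
  rw [hsb, aux_rankconj _ hP, Finset.card_eq_one] at hpr
  obtain ⟨p0, hp0⟩ := hpr
  have hiff : ∀ i, d i ^ k = c ↔ i ≠ p0 := by
    intro i
    have := Finset.ext_iff.1 hp0 i
    simp only [Finset.mem_filter, Finset.mem_univ, true_and, Finset.mem_singleton] at this
    rw [ne_eq, ← this, not_not, sub_eq_zero, ← div_eq_mul_inv, div_eq_one_iff_eq (pow_ne_zero _ (hd0 i)), eq_comm]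
  have hlam : lam0 = c * (d p0 ^ k)⁻¹ := by
    rw [hlam0, Matrix.det_mul, Matrix.det_mul, mul_right_comm, ← Matrix.det_mul, hPQ,
      Matrix.det_one, one_mul, Matrix.det_diagonal]
    apply Finset.prod_eq_single_of_mem p0 (Finset.mem_univ _)
    intro i _ hi
    rw [(hiff i).2 hi, mul_inv_cancel₀ hc]
  have hb : d p0 ^ k ≠ c := fun h => (hiff p0).1 h rfl
  -- multiplicities
  let N : ℂ → ℕ := fun z => (Finset.univ.filter fun i => d i = z).card
  have hle : ∀ z, N z ≤ ℓ := by
    intro z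
    have h1 := aux_mult hℓ X W (fun i => (hX i).2) hirr z
    have h2 : W - z • 1 = P * Matrix.diagonal (fun i => d i - z) * P⁻¹ := by
      rw [← hsb, ← hW, ← hone, hsm]; simp only [mul_one]
    rw [h2, aux_rankconj _ hP] at h1
    have h3 := Finset.card_filter_add_card_filter_not (s := Finset.univ) (fun i => d i = z)
    simp only [sub_ne_zero] at h1
    simp only [Finset.card_univ, Fintype.card_fin] at h3
    simp only [N]
    simp only [ne_eq] at h1
    omega
  let R : Finset ℂ := nthRootsFinset k c
  have hRm : ∀ z, z ∈ R ↔ z ^ k = c := fun z => mem_nthRootsFinset hk c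
  have hRc : R.card ≤ k := by
    exact (Multiset.toFinset_card_le _).trans (card_nthRoots k c)
  have hsum : ∑ z ∈ R, N z = k * ℓ := by
    have h1 : (Finset.univ.erase p0).card = ∑ z ∈ R, ((Finset.univ.erase p0).filter fun i => d i = z).card := by
      apply Finset.card_eq_sum_card_fiberwise
      intro i hi
      simp at hi
      simpa [hRm] using (hiff i).2 hi
    rw [Finset.card_erase_of_mem (Finset.mem_univ _), Finset.card_univ, Fintype.card_fin] at h1
    simp only [add_tsub_cancel_right] at h1
    rw [h1]
    refine Finset.sum_congr rfl fun z hz => ?_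
    refine congrArg Finset.card (Finset.ext fun i => ?_)
    simp only [Finset.mem_filter, Finset.mem_univ, Finset.mem_erase, true_and, and_true]
    constructor
    · intro h
      exact ⟨(hiff i).1 (h ▸ (hRm z).1 hz), h⟩
    · exact fun h => h.2
  have hall : ∀ z ∈ R, N z = ℓ := by
    by_contra! hne
    obtain ⟨z, hz, hz'⟩ := hne
    have : ∑ z ∈ R, N z < ∑ z ∈ R, ℓ :=
      Finset.sum_lt_sum (fun z _ => hle z) ⟨z, hz, lt_of_le_of_ne (hle z) hz'⟩
    rw [hsum, Finset.sum_const, smul_eq_mul] at this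
    exact absurd (Nat.mul_le_mul_right ℓ hRc) (not_le.2 this)
  refine ⟨d p0, P, d, ?_, hb, hP, hW, ?_, ?_⟩
  · rw [hlam, mul_inv, inv_inv, ← mul_assoc, mul_inv_cancel₀ hc, one_mul]
  · intro z hz
    have h := hall z ((hRm z).2 hz)
    refine Eq.trans ?_ h
    rw [Set.ncard_eq_toFinset_card']
    simp [N]
  · rw [Set.ncard_eq_one]
    refine ⟨p0, ?_⟩
    ext i
    simp only [Set.mem_ofPred_eq, Set.mem_singleton_iff]
    constructor
    · intro h
      by_contra hi
      exact hb (h ▸ (hiff i).2 hi)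
    · rintro rfl; rfl
end
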